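/- Let p be a prime, G a finite group, and P a Sylow p-subgroup of G. If P is cyclic, then for every irreducible complex character χ of G, the restriction χ_P is a sum of characters of the form λ^P induced from irreducible characters λ of subgroups Q ≤ P with χ(1)_p = |P : Q|. -/

import Mathlib

open scoped Classical

/-- The induced character (as a class function formula): for `f` a function on a
subgroup `H` of a finite group `G`, `inducedChar H f g = (1/|H|) ∑_{x ∈ G, xgx⁻¹ ∈ H} f (xgx⁻¹)`. -/
noncomputable def inducedChar {G : Type*} [Group G] [Fintype G] (H : Subgroup G)
    (f : H → ℂ) : G → ℂ :=
  fun g => (Fintype.card H : ℂ)⁻¹ *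
    ∑ x : G, if h : x * g * x⁻¹ ∈ H then f ⟨x * g * x⁻¹, h⟩ else 0

/-- `χ` is the character of an irreducible complex representation of `G`. -/
def IsIrreducibleCharacter {G : Type} [Group G] (χ : G → ℂ) : Prop :=
  ∃ V : FDRep ℂ G, CategoryTheory.Simple V ∧ χ = FDRep.character V

/-- The restriction of `χ` (a character of degree `d` of the ambient group `G`) to the
subgroup `P` is a sum of characters `λ^P` induced from irreducible characters `λ` of
subgroups `Q ≤ P` satisfying `d_p = |P : Q|` (the `p`-part of the degree equals the index). -/
def SumInducedProperty (p : ℕ) {G : Type} [Group G] [Fintype G] (P : Subgroup G)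
    (χ : G → ℂ) (d : ℕ) : Prop :=
  ∃ (n : ℕ) (Q : Fin n → Subgroup ↥P) (lam : (i : Fin n) → ↥(Q i) → ℂ),
    (∀ i, IsIrreducibleCharacter (lam i)) ∧
    (∀ i, p ^ (d.factorization p) = (Q i).index) ∧
    (∀ x : ↥P, χ ↑x = ∑ i, inducedChar (Q i) (lam i) x)


/-- irreducible characters in the `Representation` language -/
def IrrC {H : Type} [Group H] (θ : H → ℂ) : Prop :=
  ∃ (W : Type) (_ : AddCommGroup W) (_ : Module ℂ W) (_ : FiniteDimensional ℂ W)
    (σ : Representation ℂ H W), σ.IsIrreducible ∧ θ = σ.character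

lemma exists_decomp {H : Type} [Group H] [Finite H] : ∀ (n : ℕ) (V : Type) [AddCommGroup V]
    [Module ℂ V] [FiniteDimensional ℂ V] (ρ : Representation ℂ H V), Module.finrank ℂ V = n →
    ∃ s : Multiset (H → ℂ), (∀ θ ∈ s, IrrC θ) ∧ ρ.character = s.sum := by
  intro n
  induction n using Nat.strong_induction_on with
  | _ n ih =>
  intro V _ _ _ ρ hn
  by_cases hirr : ρ.IsIrreducible
  · exact ⟨{ρ.character}, by
      intro θ hθ
      rw [Multiset.mem_singleton] at hθ
      exact ⟨V, _, _, inferInstance, ρ, hirr, hθ⟩, by simp⟩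
  by_cases hsub : Subsingleton V
  · refine ⟨0, by simp, ?_⟩
    ext g
    have : ρ g = 0 := Subsingleton.elim _ _
    simp [Representation.character, this]
  have hnt : Nontrivial (Subrepresentation ρ) := by
    refine ⟨⊥, ⊤, ?_⟩
    intro h
    have h2 : (⊥ : Submodule ℂ V) = ⊤ := congrArg Subrepresentation.toSubmodule h
    exact hsub (by rwa [← Submodule.subsingleton_iff ℂ, ← subsingleton_iff_bot_eq_top])
  have : ∃ W : Subrepresentation ρ, W ≠ ⊥ ∧ W ≠ ⊤ := by
    by_contra hcon
    push Not at hcon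
    apply hirr
    exact { eq_bot_or_eq_top := fun W => by
              by_cases h : W = ⊥
              · exact Or.inl h
              · exact Or.inr (hcon W h) }
  obtain ⟨W, hW0, hW1⟩ := this
  have hss : ρ.IsSemisimpleRepresentation := by
    have : Finite H := inferInstance
    have : NeZero (Nat.card H : ℂ) := ⟨by exact_mod_cast Nat.card_pos.ne'⟩
    infer_instance
  obtain ⟨W', hc⟩ := hss.exists_isCompl W
  have hc' : IsCompl W.toSubmodule W'.toSubmodule := by
    constructor
    · rw [disjoint_iff]
      exact congrArg Subrepresentation.toSubmodule (disjoint_iff.mp hc.1)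
    · rw [codisjoint_iff]
      exact congrArg Subrepresentation.toSubmodule (codisjoint_iff.mp hc.2)
  have hlt : ∀ U : Subrepresentation ρ, U ≠ ⊤ → Module.finrank ℂ U.toSubmodule < n := by
    intro U hU
    rw [← hn]
    apply Submodule.finrank_lt
    intro h
    apply hU
    exact Subrepresentation.toSubmodule_injective h
  have hW'1 : W' ≠ ⊤ := by
    rintro rfl
    exact hW0 (by simpa using hc.1)
  obtain ⟨s, hs, hs'⟩ := ih _ (hlt W hW1) W.toSubmodule W.toRepresentation rfl
  obtain ⟨t, ht, ht'⟩ := ih _ (hlt W' hW'1) W'.toSubmodule W'.toRepresentation rfl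
  refine ⟨s + t, ?_, ?_⟩
  · intro θ hθ
    rcases Multiset.mem_add.mp hθ with h | h
    · exact hs _ h
    · exact ht _ h
  · rw [Multiset.sum_add, ← hs', ← ht']
    ext g
    have hint : DirectSum.IsInternal (fun b : Bool => if b then W.toSubmodule else W'.toSubmodule) := by
      rw [DirectSum.isInternal_submodule_iff_isCompl _ (i := true) (j := false) (by simp)]
      · simpa using hc'
      · ext b; cases b <;> simp
    have hm : ∀ b : Bool, Set.MapsTo (ρ g) (if b then W.toSubmodule else W'.toSubmodule : Submodule ℂ V)
        (if b then W.toSubmodule else W'.toSubmodule : Submodule ℂ V) := by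
      intro b
      cases b
      · exact fun v hv => W'.apply_mem_toSubmodule g hv
      · exact fun v hv => W.apply_mem_toSubmodule g hv
    have := LinearMap.trace_eq_sum_trace_restrict hint hm
    rw [Fintype.sum_bool] at this
    exact this

lemma comm_scalar {H : Type} [Group H] {W : Type} [AddCommGroup W] [Module ℂ W]
    [FiniteDimensional ℂ W] (σ : Representation ℂ H W) (hσ : σ.IsIrreducible)
    (f : W →ₗ[ℂ] W) (hf : ∀ h, σ h ∘ₗ f = f ∘ₗ σ h) : ∃ c : ℂ, f = c • LinearMap.id := by
  let F : Representation.IntertwiningMap σ σ := ⟨f, fun h => (hf h).symm⟩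
  obtain ⟨c, hc⟩ := (Representation.IsIrreducible.algebraMap_intertwiningMap_bijective_of_isAlgClosed
    (ρ := σ)).2 F
  refine ⟨c, ?_⟩
  have := congrArg Representation.IntertwiningMap.toLinearMap hc
  rw [Algebra.algebraMap_eq_smul_one] at this
  exact this.symm

lemma IrrC.prod_comm {X L : Type} [CommGroup X] [Group L] {θ : X × L → ℂ} (hθ : IrrC θ) :
    ∃ (l : X →* ℂ) (τ : L → ℂ), IrrC τ ∧ ∀ x k, θ (x, k) = l x * τ k := by
  obtain ⟨W, _, _, _, σ, hσ, rfl⟩ := hθ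
  have hnt : Nontrivial W := by
    by_contra h
    rw [not_nontrivial_iff_subsingleton] at h
    obtain ⟨a, b, hab⟩ := hσ.toNontrivial
    apply hab
    apply Subrepresentation.toSubmodule_injective
    exact Subsingleton.elim _ _
  have h1 : ∀ x : X, ∃ c : ℂ, σ (x, 1) = c • LinearMap.id := by
    intro x
    apply comm_scalar σ hσ
    rintro ⟨y, k⟩
    change σ _ * σ _ = σ _ * σ _
    rw [← map_mul, ← map_mul]
    simp [mul_comm]
  choose l hl using h1
  have hinj : ∀ a b : ℂ, a • (LinearMap.id : W →ₗ[ℂ] W) = b • LinearMap.id → a = b := by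
    intro a b hab
    obtain ⟨w, hw⟩ := exists_ne (0 : W)
    have := congrArg (fun f : W →ₗ[ℂ] W => f w) hab
    simpa [smul_left_injective ℂ hw |>.eq_iff] using this
  let lh : X →* ℂ :=
    { toFun := l
      map_one' := by
        apply hinj
        rw [← hl]
        have : ((1 : X), (1 : L)) = 1 := rfl
        rw [this, map_one, one_smul]
        rfl
      map_mul' := by
        intro x y
        apply hinj
        rw [← hl]
        have : ((x * y : X), (1 : L)) = (x, 1) * (y, 1) := by simp
        rw [this, map_mul, hl, hl]
        ext w
        simp [mul_smul, smul_comm (l y)] }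
  let τ : Representation ℂ L W := σ.comp (MonoidHom.inr X L)
  have hdec : ∀ x k, σ (x, k) = l x • τ k := by
    intro x k
    have : (x, k) = (x, 1) * ((1 : X), k) := by simp
    rw [this, map_mul, hl]
    ext w
    simp [τ]
  refine ⟨lh, τ.character, ⟨W, _, _, inferInstance, τ, ?_, rfl⟩, ?_⟩
  · refine { exists_pair_ne := ?_, eq_bot_or_eq_top := ?_ }
    · refine ⟨⊥, ⊤, fun h => ?_⟩
      have h2 : (⊥ : Submodule ℂ W) = ⊤ := congrArg Subrepresentation.toSubmodule h
      exact bot_ne_top h2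
    · intro U
      let U' : Subrepresentation σ := ⟨U.toSubmodule, by
        rintro ⟨x, k⟩ v hv
        rw [hdec]
        exact U.toSubmodule.smul_mem _ (U.apply_mem_toSubmodule k hv)⟩
      rcases hσ.eq_bot_or_eq_top U' with h | h
      · left
        apply Subrepresentation.toSubmodule_injective
        exact congrArg (fun T : Subrepresentation σ => T.toSubmodule) h
      · right
        apply Subrepresentation.toSubmodule_injective
        exact congrArg (fun T : Subrepresentation σ => T.toSubmodule) h
  · intro x k
    simp [Representation.character, hdec, lh]

lemma exists_decomp_prod {X L : Type} [CommGroup X] [Group L] [Finite X] [Finite L] 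
    {V : Type} [AddCommGroup V]
    [Module ℂ V] [FiniteDimensional ℂ V] (ρ : Representation ℂ (X × L) V) :
    ∃ s : Multiset ((X →* ℂ) × (L → ℂ)), (∀ q ∈ s, IrrC q.2) ∧
      ∀ x k, ρ.character (x, k) = (s.map (fun q => q.1 x * q.2 k)).sum := by
  obtain ⟨s, hs, h⟩ := exists_decomp _ V ρ rfl
  choose! l τ h1 h2 using fun θ (hθ : IrrC θ) => IrrC.prod_comm (X := X) (L := L) hθ
  refine ⟨s.map (fun θ => (l θ, τ θ)), ?_, ?_⟩
  · intro q hq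
    obtain ⟨θ, hθ, rfl⟩ := Multiset.mem_map.mp hq
    exact h1 _ (hs _ hθ)
  · intro x k
    rw [h, Multiset.map_map]
    have : (Multiset.sum s) (x, k) = (s.map (fun θ => θ (x,k))).sum := by
      have := map_multiset_sum (Pi.evalAddMonoidHom (fun _ : X × L => ℂ) (x, k)) s
      simpa using this
    rw [this]
    congr 1
    apply Multiset.map_congr rfl
    intro θ hθ
    exact h2 _ (hs _ hθ) x k

lemma exists_decomp_comm {X : Type} [CommGroup X] [Finite X]
    {V : Type} [AddCommGroup V]
    [Module ℂ V] [FiniteDimensional ℂ V] (ρ : Representation ℂ X V) :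
    ∃ s : Multiset (X →* ℂ), ∀ x, ρ.character x = (s.map (fun q => q x)).sum := by
  obtain ⟨s, hs, h⟩ := exists_decomp_prod (X := X) (L := Unit) (ρ.comp (MonoidHom.fst X Unit))
  have key : ∀ τ : Unit → ℂ, IrrC τ → τ 1 = 1 := by
    rintro τ ⟨W, _, _, _, σ, hσ, rfl⟩
    have : IsMulCommutative Unit := ⟨⟨fun _ _ => rfl⟩⟩
    have := Representation.IsIrreducible.finrank_eq_one_of_isMulCommutative σ
    rw [Representation.char_one, this]
    simp
  refine ⟨s.map Prod.fst, fun x => ?_⟩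
  rw [Multiset.map_map]
  have h2 := h x 1
  have h3 : Representation.character (ρ.comp (MonoidHom.fst X Unit)) (x, 1) = ρ.character x := rfl
  rw [← h3, h2]
  congr 1
  apply Multiset.map_congr rfl
  intro q hq
  simp [key _ (hs q hq)]

lemma hom_conj {X : Type} [Group X] [Finite X] (l : X →* ℂ) (x : X) : 
    l x⁻¹ = (starRingEnd ℂ) (l x) ∧ IsIntegral ℤ (l x) := by
  have h1 : l x ^ Nat.card X = 1 := by rw [← map_pow, pow_card_eq_one', map_one]
  have h2 : ‖l x‖ = 1 := Complex.norm_eq_one_of_pow_eq_one h1 Nat.card_pos.ne'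
  constructor
  · have h3 : l x⁻¹ * l x = 1 := by rw [← map_mul]; simp
    rw [eq_inv_of_mul_eq_one_left h3, Complex.inv_def, Complex.normSq_eq_norm_sq, h2]
    simp
  · exact ⟨Polynomial.X ^ Nat.card X - 1, Polynomial.monic_X_pow_sub_C 1 Nat.card_pos.ne', by simp [h1]⟩

open Pointwise in
lemma char_conj_int {H : Type} [Group H] [Finite H] {V : Type} [AddCommGroup V]
    [Module ℂ V] [FiniteDimensional ℂ V] (ρ : Representation ℂ H V) (g : H) :
    ρ.character g⁻¹ = (starRingEnd ℂ) (ρ.character g) ∧ IsIntegral ℤ (ρ.character g) := by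
  let : CommGroup (Subgroup.zpowers g) := IsCyclic.commGroup
  obtain ⟨s, hs⟩ := exists_decomp_comm (ρ.comp (Subgroup.zpowers g).subtype)
  let γ : Subgroup.zpowers g := ⟨g, Subgroup.mem_zpowers g⟩
  have h1 : ρ.character g = (s.map (fun q => q γ)).sum := hs γ
  have h2 : ρ.character g⁻¹ = (s.map (fun q => q γ⁻¹)).sum := hs γ⁻¹
  rw [h1, h2]
  constructor
  · rw [map_multiset_sum, Multiset.map_map]
    congr 1
    apply Multiset.map_congr rfl
    intro q _
    exact (hom_conj q γ).1
  · apply IsIntegral.multiset_sum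
    intro a ha
    obtain ⟨q, _, rfl⟩ := Multiset.mem_map.mp ha
    exact (hom_conj q γ).2

lemma IrrC.integral {H : Type} [Group H] [Finite H] {θ : H → ℂ} (h : IrrC θ) (g : H) :
    IsIntegral ℤ (θ g) := by
  obtain ⟨W, _, _, _, σ, hσ, rfl⟩ := h
  exact (char_conj_int σ g).2

lemma IrrC.conj_inv {H : Type} [Group H] {θ : H → ℂ} (h : IrrC θ) (x g : H) :
    θ (x * g * x⁻¹) = θ g := by
  obtain ⟨W, _, _, _, σ, hσ, rfl⟩ := h
  exact σ.char_conj g x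

lemma IrrC.orth {H : Type} [Group H] [Fintype H] {θ τ : H → ℂ} (h : IrrC θ) (h' : IrrC τ) :
    ∑ g, θ g * (starRingEnd ℂ) (τ g) = if θ = τ then (Fintype.card H : ℂ) else 0 := by
  have hc : (Nat.card H : ℂ) ≠ 0 := by exact_mod_cast Nat.card_pos.ne'
  let : Invertible (Nat.card H : ℂ) := invertibleOfNonzero hc
  have key : ∀ {θ τ : H → ℂ}, IrrC θ → IrrC τ →
     (∑ g, θ g * (starRingEnd ℂ) (τ g) = 0) ∨ (θ = τ ∧ ∑ g, θ g * (starRingEnd ℂ) (τ g) = Nat.card H) := by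
    rintro _ _ ⟨W, _, _, _, σ, hσ, rfl⟩ ⟨W', _, _, _, σ', hσ', rfl⟩
    have h := Representation.char_orthonormal σ σ'
    simp_rw [fun g => (char_conj_int σ' g).1] at h
    rw [inv_mul_eq_iff_eq_mul₀ hc] at h
    split_ifs at h with h2
    · right
      exact ⟨(Representation.char_iso h2.some).symm, by simpa using h⟩
    · left; simpa using h
  split_ifs with heq
  · subst heq
    rw [← Nat.card_eq_fintype_card]
    obtain ⟨W, _, _, _, σ, hσ, rfl⟩ := h
    have h := Representation.char_orthonormal σ σ
    simp_rw [fun g => (char_conj_int σ g).1] at h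
    rw [inv_mul_eq_iff_eq_mul₀ hc] at h
    rw [h, if_pos ⟨Representation.Equiv.refl σ⟩, mul_one]
  · rcases key h h' with h | h
    · exact h
    · exact absurd h.1 heq

lemma IrrC.one_ne {H : Type} [Group H] {θ : H → ℂ} (h : IrrC θ) :
    ∃ d : ℕ, 0 < d ∧ θ 1 = d := by
  obtain ⟨W, _, _, _, σ, hσ, rfl⟩ := h
  have hnt : Nontrivial W := by
    by_contra h
    rw [not_nontrivial_iff_subsingleton] at h
    obtain ⟨a, b, hab⟩ := hσ.toNontrivial
    apply hab
    apply Subrepresentation.toSubmodule_injective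
    exact Subsingleton.elim _ _
  exact ⟨_, Module.finrank_pos (R := ℂ) (M := W), by simp⟩

lemma IrrC.central {G : Type} [Group G] [Fintype G] {χ : G → ℂ} (h : IrrC χ) (φ : G → ℂ)
    (hφ : ∀ x g, φ (x * g * x⁻¹) = φ g) (hi : ∀ g, IsIntegral ℤ (φ g)) :
    ∃ c : ℂ, IsIntegral ℤ c ∧ c * χ 1 = ∑ g, φ g * χ g := by
  have hd := h.one_ne
  obtain ⟨W, _, _, _, σ, hσ, rfl⟩ := h
  have hnt : Nontrivial W := by
    obtain ⟨d, hd, hd'⟩ := hd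
    rw [Representation.char_one] at hd'
    have : 0 < Module.finrank ℂ W := by
      have : Module.finrank ℂ W = d := by exact_mod_cast hd'
      omega
    exact Module.nontrivial_of_finrank_pos this
  let f : W →ₗ[ℂ] W := ∑ g, φ g • σ g
  obtain ⟨c, hc⟩ := comm_scalar σ hσ f (by
    intro x
    have h1 : σ x ∘ₗ f = ∑ g, φ g • σ (x * g) := by
      change σ x * f = _
      simp only [f, Finset.mul_sum, map_mul, mul_smul_comm]
    have h2 : f ∘ₗ σ x = ∑ g, φ g • σ (g * x) := by
      change f * σ x = _
      simp only [f, Finset.sum_mul, map_mul, smul_mul_assoc]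
    rw [h1, h2]
    refine Fintype.sum_equiv (MulAut.conj x).toEquiv _ _ ?_
    intro g
    simp [hφ])
  refine ⟨c, ?_, ?_⟩
  · let A := integralClosure ℤ ℂ
    let z : MonoidAlgebra A G := ∑ g, MonoidAlgebra.single g (⟨φ g, hi g⟩ : A)
    have hz : IsIntegral A z := Algebra.IsIntegral.isIntegral z
    let F : MonoidAlgebra A G →ₐ[A] Module.End ℂ W := MonoidAlgebra.lift A _ G σ
    have hF : F z = f := by
      simp only [z, map_sum, F, MonoidAlgebra.lift_single, f]
      rfl
    have h1 : IsIntegral A (F z) := hz.map F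
    rw [hF, hc] at h1
    have h2 : c • (LinearMap.id : W →ₗ[ℂ] W) = algebraMap ℂ (Module.End ℂ W) c := by
      rw [Algebra.algebraMap_eq_smul_one]; rfl
    rw [h2] at h1
    have h3 : IsIntegral A c := (isIntegral_algebraMap_iff (FaithfulSMul.algebraMap_injective _ _)).mp h1
    exact isIntegral_trans (A := A) c h3
  · have h1 := congrArg (LinearMap.trace ℂ W) hc
    simp only [f, map_sum, map_smul, smul_eq_mul] at h1
    rw [Representation.char_one]
    simp only [Representation.character]
    rw [h1]
    simp

/-- the order over the degree is a natural number -/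
lemma IrrC.deg_dvd {G : Type} [Group G] [Fintype G] {χ : G → ℂ} (h : IrrC χ) (d : ℕ)
    (hd : χ 1 = d) : d ∣ Fintype.card G := by
  obtain ⟨d', hd0, hd1⟩ := h.one_ne
  have : d = d' := by exact_mod_cast hd.symm.trans hd1
  subst this
  have hint : ∀ g, IsIntegral ℤ ((starRingEnd ℂ) (χ g)) := fun g =>
    (h.integral g).map (starRingEnd ℂ).toIntAlgHom
  obtain ⟨c, hc, hc'⟩ := h.central (fun g => (starRingEnd ℂ) (χ g))
    (fun x g => by simp [h.conj_inv]) hint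
  have h2 := h.orth h
  simp only [if_true] at h2
  simp_rw [mul_comm] at hc' h2
  rw [← hc', hd] at h2
  have hd0' : (d : ℂ) ≠ 0 := by exact_mod_cast hd0.ne'
  have h3 : c = algebraMap ℚ ℂ ((Fintype.card G : ℚ) / d) := by
    push_cast
    rw [eq_div_iff hd0', h2]
  rw [h3, isIntegral_algebraMap_iff (algebraMap ℚ ℂ).injective] at hc
  obtain ⟨n, hn⟩ := IsIntegrallyClosed.isIntegral_iff.mp hc
  have hd0'' : (d : ℚ) ≠ 0 := by exact_mod_cast hd0.ne'
  rw [eq_div_iff hd0''] at hn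
  have : (n * d : ℤ) = Fintype.card G := by
    rw [eq_intCast] at hn
    exact_mod_cast hn
  exact_mod_cast (Dvd.intro_left n this : (d : ℤ) ∣ Fintype.card G)

lemma multiset_inner {H : Type} [Group H] [Fintype H] (s : Multiset (H → ℂ)) (hs : ∀ θ ∈ s, IrrC θ)
    (τ : H → ℂ) (hτ : IrrC τ) :
    ∑ g, s.sum g * (starRingEnd ℂ) (τ g) = Fintype.card H * s.count τ := by
  induction s using Multiset.induction with
  | empty => simp
  | cons a s ih =>
    have h1 := ih (fun θ hθ => hs θ (Multiset.mem_cons_of_mem hθ))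
    have h2 := (hs a (Multiset.mem_cons_self a s)).orth hτ
    simp only [Multiset.sum_cons, Pi.add_apply, add_mul, Finset.sum_add_distrib]
    rw [h1, h2, Multiset.count_cons]
    by_cases h : a = τ
    · simp [h]; ring
    · simp [h, Ne.symm h]

lemma simple_irrC {G : Type} [Group G] [Fintype G] (V : FDRep ℂ G) (hV : CategoryTheory.Simple V) :
    IrrC V.character := by
  obtain ⟨s, hs, h⟩ := exists_decomp _ V V.ρ rfl
  have hch : V.character = s.sum := h
  have hc : (Nat.card G : ℂ) ≠ 0 := by exact_mod_cast Nat.card_pos.ne'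
  have hn : ∑ g, V.character g * V.character g⁻¹ = Nat.card G := by
    let : Invertible (Nat.card G : ℂ) := invertibleOfNonzero hc
    have := FDRep.char_orthonormal V V
    rw [if_pos ⟨CategoryTheory.Iso.refl V⟩, inv_mul_eq_iff_eq_mul₀ hc] at this
    simpa using this
  have hconj : ∀ g, V.character g⁻¹ = (starRingEnd ℂ) (V.character g) := fun g =>
    (char_conj_int V.ρ g).1
  have hev : ∀ g, s.sum g = (s.map (fun θ => θ g)).sum := by
    intro g
    have := map_multiset_sum (Pi.evalAddMonoidHom (fun _ : G => ℂ) g) s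
    simpa using this
  have h3 : ∑ g, V.character g * V.character g⁻¹ = 
      Fintype.card G * (s.map (fun τ => ((s.count τ : ℕ) : ℂ))).sum := by
    simp_rw [hconj]
    have : ∀ t : Multiset (G → ℂ), (∀ θ ∈ t, IrrC θ) →
       ∑ g, s.sum g * (starRingEnd ℂ) (t.sum g) = 
        Fintype.card G * (t.map (fun τ => ((s.count τ : ℕ) : ℂ))).sum := by
      intro t
      induction t using Multiset.induction with
      | empty => simp
      | cons a t ih =>
        intro ht
        have h1 := ih (fun θ hθ => ht θ (Multiset.mem_cons_of_mem hθ))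
        have h2 := multiset_inner s hs a (ht a (Multiset.mem_cons_self a t))
        simp only [Multiset.sum_cons, Pi.add_apply, map_add, mul_add, Finset.sum_add_distrib,
          Multiset.map_cons]
        rw [h1, h2]
    rw [hch]
    exact this s hs
  rw [hn, ← Nat.card_eq_fintype_card] at h3
  have h4 : (s.map (fun τ => ((s.count τ : ℕ) : ℂ))).sum = 1 := by
    have : (Nat.card G : ℂ) * (s.map (fun τ => ((s.count τ : ℕ) : ℂ))).sum = Nat.card G * 1 := by
      rw [← h3, mul_one]
    exact mul_left_cancel₀ hc this
  have h5 : (s.map (fun τ => s.count τ)).sum = 1 := by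
    have : (((s.map (fun τ => s.count τ)).sum : ℕ) : ℂ) = 1 := by
      rw [Nat.cast_multiset_sum, Multiset.map_map]; exact h4
    exact_mod_cast this
  have h6 : s.card ≤ 1 := by
    rw [← h5]
    have := Multiset.card_nsmul_le_sum (s := s.map (fun τ => s.count τ)) (a := 1) (by
      intro x hx
      obtain ⟨τ, hτ, rfl⟩ := Multiset.mem_map.mp hx
      exact Multiset.one_le_count_iff_mem.mpr hτ)
    simpa using this
  have h7 : s ≠ 0 := by
    rintro rfl
    simp at h5
  have h8 : s.card = 1 := le_antisymm h6 (Multiset.card_pos.mpr h7)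
  obtain ⟨θ, rfl⟩ := Multiset.card_eq_one.mp h8
  rw [hch, Multiset.sum_singleton]
  exact hs θ (by simp)

lemma hom_simple {Q : Type} [Group Q] [Finite Q] (l : Q →* ℂ) : IsIrreducibleCharacter (l : Q → ℂ) := by
  let : Fintype Q := Fintype.ofFinite Q
  let r : Q →* (ℂ →ₗ[ℂ] ℂ) := (algebraMap ℂ (Module.End ℂ ℂ)).toMonoidHom.comp l
  have hch : (FDRep.of r).character = l := by
    ext g
    change LinearMap.trace ℂ ℂ (r g) = l g
    simp [r, Algebra.algebraMap_eq_smul_one]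
  refine ⟨FDRep.of r, ?_, hch.symm⟩
  have hc : (Nat.card Q : ℂ) ≠ 0 := by exact_mod_cast Nat.card_pos.ne'
  have : NeZero (Nat.card Q : ℂ) := ⟨hc⟩
  rw [FDRep.simple_iff_char_is_norm_one, hch]
  have : ∀ g, l g * l g⁻¹ = 1 := by intro g; rw [← map_mul]; simp
  simp only [this]
  simp

open Polynomial in
lemma norm_bound_aux (K : Type) [Field K] [NumberField K] (N : ℕ) [NeZero N]
    [IsCyclotomicExtension {N} ℚ K] (F : ℤ[X]) (t : ℕ) (ht : 0 < t) (ζ0 : ℂ)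
    (hζ0 : IsPrimitiveRoot ζ0 N) (h0 : aeval ζ0 F ≠ 0) (hi : IsIntegral ℤ (aeval ζ0 F / t)) :
    (t : ℝ) ^ 2 * Nat.totient N ≤ ∑ ζ ∈ primitiveRoots N ℂ, ‖aeval ζ F‖ ^ 2 := by
  let z : K := IsCyclotomicExtension.zeta N ℚ K
  have hz : IsPrimitiveRoot z N := IsCyclotomicExtension.zeta_spec N ℚ K
  have hirr : Irreducible (cyclotomic N ℚ) := cyclotomic.irreducible_rat (NeZero.pos N)
  let e := hz.embeddingsEquivPrimitiveRoots ℂ hirr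
  let a : K := aeval z F / t
  have hσ : ∀ σ : K →ₐ[ℚ] ℂ, σ a = aeval (e σ : ℂ) F / t := by
    intro σ
    have h1 : (e σ : ℂ) = σ z := hz.embeddingsEquivPrimitiveRoots_apply_coe ℂ hirr σ
    rw [h1]
    simp only [a, map_div₀, map_natCast]
    congr 1
    exact (aeval_algHom_apply (σ.restrictScalars ℤ) z F).symm
  have hm0 : ζ0 ∈ primitiveRoots N ℂ := (mem_primitiveRoots (NeZero.pos N)).mpr hζ0
  let σ0 := e.symm ⟨ζ0, hm0⟩
  have hσ0 : σ0 a = aeval ζ0 F / t := by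
    rw [hσ]; simp [σ0]
  have ht' : (t : ℂ) ≠ 0 := by exact_mod_cast ht.ne'
  have ha0 : a ≠ 0 := by
    intro h
    rw [h, map_zero] at hσ0
    rcases div_eq_zero_iff.mp hσ0.symm with h | h
    · exact h0 h
    · exact ht' h
  have hai : IsIntegral ℤ a := by
    rw [← hσ0] at hi
    exact (isIntegral_algHom_iff (σ0.restrictScalars ℤ) σ0.injective).mp hi
  have hn0 : Algebra.norm ℚ a ≠ 0 := Algebra.norm_ne_zero_iff.mpr ha0
  obtain ⟨m, hm⟩ := IsIntegrallyClosed.isIntegral_iff.mp (Algebra.isIntegral_norm ℚ hai)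
  rw [eq_intCast] at hm
  have hm1 : m ≠ 0 := by rintro rfl; exact hn0 (by simpa using hm.symm)
  have hprod := Algebra.norm_eq_prod_embeddings ℚ ℂ a
  have hp1 : 1 ≤ ∏ σ : K →ₐ[ℚ] ℂ, ‖σ a‖ := by
    rw [← norm_prod, ← hprod, ← hm]
    simp only [eq_ratCast, Rat.cast_intCast, Complex.norm_intCast]
    exact_mod_cast Int.one_le_abs hm1
  have hpos : ∀ σ : K →ₐ[ℚ] ℂ, 0 < ‖σ a‖ := fun σ => by
    rw [norm_pos_iff]; simpa using ha0
  have hcard : Fintype.card (K →ₐ[ℚ] ℂ) = Nat.totient N := by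
    rw [Fintype.card_congr e, Fintype.card_coe, Complex.card_primitiveRoots]
  have hsum : (Nat.totient N : ℝ) ≤ ∑ σ : K →ₐ[ℚ] ℂ, ‖σ a‖ ^ 2 := by
    have h1 : 0 ≤ ∑ σ : K →ₐ[ℚ] ℂ, Real.log (‖σ a‖ ^ 2) := by
      rw [← Real.log_prod (fun σ _ => (pow_pos (hpos σ) 2).ne')]
      apply Real.log_nonneg
      rw [Finset.prod_pow]
      exact one_le_pow₀ hp1
    have h2 : ∑ σ : K →ₐ[ℚ] ℂ, Real.log (‖σ a‖ ^ 2) ≤ ∑ σ : K →ₐ[ℚ] ℂ, (‖σ a‖ ^ 2 - 1) :=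
      Finset.sum_le_sum fun σ _ => Real.log_le_sub_one_of_pos (pow_pos (hpos σ) 2)
    rw [Finset.sum_sub_distrib] at h2
    simp only [Finset.sum_const, Finset.card_univ, hcard, nsmul_eq_mul, mul_one] at h2
    linarith
  have heq : ∑ σ : K →ₐ[ℚ] ℂ, ‖σ a‖ ^ 2 = (∑ ζ ∈ primitiveRoots N ℂ, ‖aeval ζ F‖ ^ 2) / t ^ 2 := by
    rw [← Finset.sum_coe_sort (primitiveRoots N ℂ), Finset.sum_div]
    refine Fintype.sum_equiv e _ _ ?_
    intro σ
    rw [hσ]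
    simp [div_pow]
  rw [heq, le_div_iff₀ (by positivity)] at hsum
  linarith

open Polynomial in
lemma norm_bound (N : ℕ) [NeZero N] (F : ℤ[X]) (t : ℕ) (ht : 0 < t) (ζ0 : ℂ)
    (hζ0 : IsPrimitiveRoot ζ0 N) (h0 : aeval ζ0 F ≠ 0) (hi : IsIntegral ℤ (aeval ζ0 F / t)) :
    (t : ℝ) ^ 2 * Nat.totient N ≤ ∑ ζ ∈ primitiveRoots N ℂ, ‖aeval ζ F‖ ^ 2 := by
  have : NeZero ((N : ℕ) : ℚ) := ⟨by exact_mod_cast NeZero.ne N⟩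
  have : IsCyclotomicExtension {N} ℚ (CyclotomicField N ℚ) :=
    CyclotomicField.isCyclotomicExtension N ℚ
  exact norm_bound_aux (CyclotomicField N ℚ) N F t ht ζ0 hζ0 h0 hi

open Polynomial in
lemma hom_norm_bound {X : Type} [Group X] [Finite X] (x0 : X)
    (s : Multiset (X →* ℂ)) (t : ℕ) (ht : 0 < t) (i0 : ℕ) (hi0 : i0.Coprime (Nat.card X))
    (h0 : (s.map (fun l => l (x0 ^ i0))).sum ≠ 0)
    (hi : IsIntegral ℤ ((s.map (fun l => l (x0 ^ i0))).sum / t)) :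
    (t : ℝ) ^ 2 * Nat.totient (Nat.card X) ≤ 
      ∑ i ∈ (Finset.range (Nat.card X)).filter (fun i => i.Coprime (Nat.card X)),
        ‖(s.map (fun l => l (x0 ^ i))).sum‖ ^ 2 := by
  set N := Nat.card X with hN
  have hNpos : 0 < N := Nat.card_pos
  have : NeZero N := ⟨hNpos.ne'⟩
  have hw := Complex.isPrimitiveRoot_exp N hNpos.ne'
  set w := Complex.exp (2 * Real.pi * Complex.I / N)
  have h1 : ∀ l : X →* ℂ, ∃ a, w ^ a = l x0 := by
    intro l
    have : l x0 ^ N = 1 := by rw [← map_pow, pow_card_eq_one', map_one]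
    obtain ⟨a, _, ha⟩ := hw.eq_pow_of_pow_eq_one this
    exact ⟨a, ha⟩
  choose a ha using h1
  let F : ℤ[X] := (s.map (fun l => (Polynomial.X : ℤ[X]) ^ (a l))).sum
  have hF : ∀ i, (s.map (fun l => l (x0 ^ i))).sum = aeval (w ^ i) F := by
    intro i
    simp only [F, map_multiset_sum, Multiset.map_map]
    congr 1
    apply Multiset.map_congr rfl
    intro l _
    simp [map_pow, ← ha, ← pow_mul, mul_comm]
  simp only [hF] at h0 hi ⊢
  have := norm_bound N F t ht (w ^ i0) (hw.pow_of_coprime i0 hi0) h0 hi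
  refine this.trans (le_of_eq ?_)
  symm
  refine Finset.sum_bij (fun i _ => w ^ i) ?_ ?_ ?_ ?_
  · intro i hi
    simp only [Finset.mem_filter] at hi
    exact (mem_primitiveRoots hNpos).mpr (hw.pow_of_coprime i hi.2)
  · intro i hi j hj hij
    simp only [Finset.mem_filter, Finset.mem_range] at hi hj
    exact hw.pow_inj hi.1 hj.1 hij
  · intro b hb
    obtain ⟨i, hi, hi', rfl⟩ := (hw.isPrimitiveRoot_iff).mp ((mem_primitiveRoots hNpos).mp hb)
    exact ⟨i, Finset.mem_filter.mpr ⟨Finset.mem_range.mpr hi, hi'⟩, rfl⟩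
  · intro i _; rfl

lemma aut_pow_eq_one {p : ℕ} [hp : Fact p.Prime] {A : Type} [Group A] [Finite A] (hA : IsCyclic A) (n : ℕ)
    (hn : Nat.card A = p ^ n) (α : MulAut A) (x0 : A) (hx0 : x0 ≠ 1) (hfix : α x0 = x0) :
    α ^ (p ^ n) = 1 := by
  obtain ⟨u, hu⟩ := hA.exists_generator
  obtain ⟨i, hi⟩ := Subgroup.mem_zpowers_iff.mp (hu (α u))
  obtain ⟨j, hj⟩ := Subgroup.mem_zpowers_iff.mp (hu x0)
  have hord : orderOf u = p ^ n := by rw [← hn]; exact orderOf_eq_card_of_forall_mem_zpowers hu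
  have hpow : ∀ k : ℕ, (α ^ k) u = u ^ (i ^ k) := by
    intro k
    induction k with
    | zero => simp
    | succ k ih => rw [pow_succ', MulAut.mul_apply, ih, map_zpow, ← hi, ← zpow_mul, pow_succ']
  have h1 : ((p ^ n : ℕ) : ℤ) ∣ j * (i - 1) := by
    rw [← hord, orderOf_dvd_iff_zpow_eq_one, mul_sub, zpow_sub, mul_comm, zpow_mul, hi, ← map_zpow, hj,
      hfix, mul_one, hj]
    simp
  have h2 : ¬ ((p ^ n : ℕ) : ℤ) ∣ j := by
    intro h
    rw [← hord, orderOf_dvd_iff_zpow_eq_one, hj] at h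
    exact hx0 h
  have h3 : (p : ℤ) ∣ i - 1 := by
    by_contra h
    apply h2
    have hpp : Prime (p : ℤ) := Nat.prime_iff_prime_int.mp hp.out
    have hcop : IsCoprime ((p ^ n : ℕ) : ℤ) (i - 1) := by
      push_cast
      exact ((Prime.coprime_iff_not_dvd hpp).mpr h).pow_left
    exact hcop.dvd_of_dvd_mul_right h1
  have h4 := dvd_sub_pow_of_dvd_sub h3 n
  have h5 : u ^ (i ^ p ^ n) = u := by
    have : u ^ (i ^ p ^ n - 1) = 1 := by
      rw [← orderOf_dvd_iff_zpow_eq_one, hord]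
      rw [one_pow] at h4
      exact dvd_trans (by push_cast; exact pow_dvd_pow _ (Nat.le_succ n)) h4
    rw [zpow_sub, zpow_one, mul_inv_eq_one] at this
    exact this
  ext a
  obtain ⟨m, rfl⟩ := Subgroup.mem_zpowers_iff.mp (hu a)
  rw [map_zpow, hpow, h5]
  simp

lemma norm_le_cent {p : ℕ} [hp : Fact p.Prime] {H : Type} [Group H] [Finite H] (P : Sylow p H)
    (hP : IsCyclic P) (x0 : H) (hx0 : x0 ∈ P) (hne : x0 ≠ 1) (hc : ∀ h : H, h * x0 = x0 * h) :
    Subgroup.normalizer (P : Set H) ≤ Subgroup.centralizer (P : Set H) := by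
  open Subgroup in
  obtain ⟨n, hn⟩ := P.2.exists_card_eq
  intro g hg
  let f := (P : Subgroup H).normalizerMonoidHom
  let γ : normalizer ((P : Subgroup H) : Set H) := ⟨g, hg⟩
  have h1 : (f γ) ^ (p ^ n) = 1 := by
    apply aut_pow_eq_one hP n hn (f γ) ⟨x0, hx0⟩ (by simpa [Subtype.ext_iff] using hne)
    apply Subtype.ext
    change g * x0 * g⁻¹ = x0
    rw [hc g]; simp
  have hk := (P : Subgroup H).normalizerMonoidHom_ker
  have hmc : IsMulCommutative (P : Subgroup H) :=
    ⟨⟨fun a b => (IsCyclic.commGroup (α := P)).mul_comm a b⟩⟩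
  have h2 : Nat.Coprime p (f.ker.index) := by
    rw [Nat.Prime.coprime_iff_not_dvd hp.out]
    intro h
    apply P.not_dvd_index
    refine h.trans ?_
    rw [hk]
    change relIndex _ _ ∣ _
    exact (relIndex_dvd_of_le_left _ (P : Subgroup H).le_centralizer).trans (relIndex_dvd_index_of_le P.le_normalizer)
  have h3 : (f γ) ^ f.ker.index = 1 := by
    rw [← map_pow]
    exact f.ker.pow_index_mem γ
  have h4 : f γ = 1 := by
    have := Nat.eq_one_of_dvd_coprimes (h2.pow_left n) (orderOf_dvd_of_pow_eq_one h1) (orderOf_dvd_of_pow_eq_one h3)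
    exact orderOf_eq_one_iff.mp this
  have h5 : γ ∈ f.ker := h4
  rw [hk] at h5
  exact h5

lemma exists_compl0 {p : ℕ} [hp : Fact p.Prime] {H : Type} [Group H] [Finite H] (P : Sylow p H)
    (hP : IsCyclic P) (x0 : H) (hx0 : x0 ∈ P) (hne : x0 ≠ 1) (hc : ∀ h : H, h * x0 = x0 * h) :
    ∃ K : Subgroup H, K.Normal ∧ Nat.card K * Nat.card P = Nat.card H ∧ ¬ p ∣ Nat.card K := by
  have hN := norm_le_cent P hP x0 hx0 hne hc
  have hK := MonoidHom.ker_transferSylow_isComplement' P hN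
  have hK2 := MonoidHom.not_dvd_card_ker_transferSylow P hN
  exact ⟨(MonoidHom.transferSylow P hN).ker, inferInstance, hK.card_mul, hK2⟩

lemma exists_compl {p : ℕ} [hp : Fact p.Prime] {G : Type} [Group G] [Finite G] (P : Sylow p G)
    (hP : IsCyclic P) (x0 : G) (hx0 : x0 ∈ P) (hne : x0 ≠ 1) :
    ∃ L : Subgroup G, (∀ l ∈ L, x0 * l = l * x0) ∧ 
      (∀ c, c * x0 = x0 * c → ∀ l ∈ L, c * l * c⁻¹ ∈ L) ∧
      Nat.card L * Nat.card P = Nat.card (Subgroup.centralizer {x0}) ∧ ¬ p ∣ Nat.card L := by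
  have hcomm : ∀ a ∈ P, ∀ b ∈ P, a * b = b * a := by
    intro a ha b hb
    exact congrArg Subtype.val ((IsCyclic.commGroup (α := P)).mul_comm ⟨a, ha⟩ ⟨b, hb⟩)
  set C := Subgroup.centralizer {x0} with hC
  have hPC : (P : Subgroup G) ≤ C := by
    intro a ha
    rw [hC, Subgroup.mem_centralizer_singleton_iff]
    exact hcomm a ha x0 hx0
  let P' : Sylow p C := P.subtype hPC
  let e : P' ≃* P := Subgroup.subgroupOfEquivOfLe hPC
  have hP' : IsCyclic P' := isCyclic_of_surjective e.symm e.symm.surjective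
  have hx0C : x0 ∈ C := hPC hx0
  obtain ⟨K, hKn, hKc, hK2⟩ := exists_compl0 P' hP' ⟨x0, hx0C⟩ hx0 (by simpa [Subtype.ext_iff] using hne) (by
    rintro ⟨h, hh⟩
    apply Subtype.ext
    rw [hC, Subgroup.mem_centralizer_singleton_iff] at hh
    exact hh)
  have hcP : Nat.card P' = Nat.card P := Nat.card_congr e.toEquiv
  have hcK : Nat.card (K.map C.subtype) = Nat.card K :=
    Nat.card_congr (K.equivMapOfInjective _ C.subtype_injective).toEquiv.symm
  refine ⟨K.map C.subtype, ?_, ?_, ?_, ?_⟩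
  · rintro _ ⟨⟨l, hl⟩, hlK, rfl⟩
    rw [hC, Subgroup.mem_centralizer_singleton_iff] at hl
    exact hl.symm
  · rintro c hc _ ⟨l, hlK, rfl⟩
    have hcC : c ∈ C := by
      rw [hC, Subgroup.mem_centralizer_singleton_iff]
      exact hc
    exact ⟨⟨c, hcC⟩ * l * ⟨c, hcC⟩⁻¹, hKn.conj_mem l hlK _, rfl⟩
  · rw [hcK, ← hcP]
    exact hKc
  · rw [hcK]; exact hK2

lemma card_normalizer_le {p : ℕ} [hp : Fact p.Prime] {G : Type} [Group G] [Finite G] (P : Sylow p G)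
    (hP : IsCyclic P) (x0 : G) (hx0 : x0 ∈ P) (hne : x0 ≠ 1) :
    Nat.card (Subgroup.normalizer ((Subgroup.zpowers x0 : Subgroup G) : Set G)) ≤ 
      (p - 1) * Nat.card (Subgroup.centralizer {x0}) := by
  have hcomm : ∀ a ∈ P, ∀ b ∈ P, a * b = b * a := by
    intro a ha b hb
    exact congrArg Subtype.val ((IsCyclic.commGroup (α := P)).mul_comm ⟨a, ha⟩ ⟨b, hb⟩)
  open Subgroup in
  set X := Subgroup.zpowers x0 with hX
  have hXP : X ≤ P := by rw [hX, zpowers_le]; exact hx0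
  have hcx : centralizer ((X : Subgroup G) : Set G) = centralizer {x0} := by
    rw [hX, zpowers_eq_closure, centralizer_closure]
  have hle : centralizer ((X : Subgroup G) : Set G) ≤ normalizer (X : Set G) := by
    intro g hg
    rw [Subgroup.mem_normalizer_iff]
    have key : ∀ c ∈ centralizer ((X : Subgroup G) : Set G), ∀ h ∈ X, c * h * c⁻¹ ∈ X := by
      intro c hc h hh
      rw [Subgroup.mem_centralizer_iff] at hc
      rw [← hc h hh]; simpa using hh
    intro h
    refine ⟨fun hh => key g hg h hh, fun hh => ?_⟩
    have := key g⁻¹ (inv_mem hg) _ hh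
    simpa [mul_assoc] using this
  have hcard : Nat.card (normalizer (X : Set G)) = 
      (centralizer ((X : Subgroup G) : Set G)).relIndex (normalizer (X : Set G)) *
        Nat.card (centralizer ((X : Subgroup G) : Set G)) := by
    rw [mul_comm, ← Subgroup.card_mul_index ((centralizer ((X : Subgroup G) : Set G)).subgroupOf (normalizer (X : Set G)))]
    congr 1
    exact Nat.card_congr (subgroupOfEquivOfLe hle).toEquiv
  rw [hcard, ← hcx]
  apply Nat.mul_le_mul_right
  have key := card_dvd_of_injective _ (QuotientGroup.kerLift_injective X.normalizerMonoidHom)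
  rw [normalizerMonoidHom_ker, ← index, ← relIndex] at key
  have hXc : IsCyclic X := by rw [hX]; infer_instance
  obtain ⟨r, hr⟩ := (P.2.to_le hXP).exists_card_eq
  have hr0 : 0 < r := by
    rcases Nat.eq_zero_or_pos r with h | h
    · exfalso
      rw [h, pow_zero, Nat.card_zpowers] at hr
      exact hne (orderOf_eq_one_iff.mp hr)
    · exact h
  rw [hXc.card_mulAut, hr, Nat.totient_prime_pow hp.out hr0] at key
  have hcop : Nat.Coprime ((centralizer ((X : Subgroup G) : Set G)).relIndex (normalizer (X : Set G))) (p ^ (r - 1)) := by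
    apply Nat.Coprime.pow_right
    rw [Nat.coprime_comm, Nat.Prime.coprime_iff_not_dvd hp.out]
    intro h
    apply P.not_dvd_index
    refine h.trans ((relIndex_dvd_index_of_le hle).trans (index_dvd_of_le ?_))
    intro a ha
    rw [hcx, Subgroup.mem_centralizer_singleton_iff]
    exact hcomm a ha x0 hx0
  exact Nat.le_of_dvd (Nat.sub_pos_of_lt hp.out.one_lt) (hcop.dvd_of_dvd_mul_left key)

lemma central_pair {G : Type} [Group G] [Fintype G] {χ : G → ℂ} (h : IrrC χ) (C : Subgroup G)
    (F : G → ℂ) (hF : ∀ g, IsIntegral ℤ (F g)) (hC : ∀ c ∈ C, ∀ g, F (c * g * c⁻¹) = F g)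
    (hu : ∀ x g, F g ≠ 0 → F (x * g * x⁻¹) ≠ 0 → x ∈ C) :
    ∃ c : ℂ, IsIntegral ℤ c ∧
      c * χ 1 * Nat.card C = Nat.card G * ∑ g, F g * χ g := by
  have hC0 : (Nat.card C : ℂ) ≠ 0 := by
    exact_mod_cast Nat.card_pos.ne'
  let S : G → ℂ := fun g => ∑ x : G, F (x * g * x⁻¹)
  have hS : ∀ g, ∃ z : ℂ, IsIntegral ℤ z ∧ S g = Nat.card C * z := by
    intro g
    by_cases hg : ∃ x0, F (x0 * g * x0⁻¹) ≠ 0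
    · obtain ⟨x0, hx0⟩ := hg
      refine ⟨F (x0 * g * x0⁻¹), hF _, ?_⟩
      have h1 : S g = ∑ x : G, F (x * (x0 * g * x0⁻¹) * x⁻¹) := by
        refine (Fintype.sum_equiv (Equiv.mulRight x0) _ _ ?_).symm
        intro x
        simp [mul_assoc]
      rw [h1]
      have h2 : ∀ x : G, F (x * (x0 * g * x0⁻¹) * x⁻¹) = if x ∈ C then F (x0 * g * x0⁻¹) else 0 := by
        intro x
        split_ifs with hx
        · exact hC x hx _
        · by_contra hne
          exact hx (hu x _ hx0 hne)
      rw [Finset.sum_congr rfl (fun x _ => h2 x), ← Finset.sum_filter, Finset.sum_const, nsmul_eq_mul]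
      congr 2
      rw [Nat.card_eq_fintype_card, Fintype.card_subtype]
    · push Not at hg
      refine ⟨0, isIntegral_zero, ?_⟩
      simp only [S, mul_zero]
      exact Finset.sum_eq_zero (fun x _ => hg x)
  choose φ hφi hφ using hS
  have hcl : ∀ x g, φ (x * g * x⁻¹) = φ g := by
    intro x g
    apply mul_left_cancel₀ hC0
    rw [← hφ, ← hφ]
    refine Fintype.sum_equiv (Equiv.mulRight x) _ _ ?_
    intro y
    simp [mul_assoc]
  obtain ⟨c, hc, hc2⟩ := h.central φ hcl hφi
  refine ⟨c, hc, ?_⟩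
  rw [hc2, Finset.sum_mul]
  have h3 : ∀ g, φ g * χ g * Nat.card C = ∑ x : G, F (x * g * x⁻¹) * χ g := by
    intro g
    rw [← Finset.sum_mul]
    change _ = S g * χ g
    rw [hφ]; ring
  rw [Finset.sum_congr rfl (fun g _ => h3 g), Finset.sum_comm]
  have h4 : ∀ x : G, ∑ g, F (x * g * x⁻¹) * χ g = ∑ g, F g * χ g := by
    intro x
    refine Fintype.sum_equiv (MulAut.conj x).toEquiv _ _ ?_
    intro g
    simp [h.conj_inv]
  rw [Finset.sum_congr rfl (fun g _ => h4 g)]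
  simp

lemma sum_comp_le {W G : Type} [Fintype G] (s : Finset W) (ψ : W → G) (a : G → ℝ)
    (ha : ∀ g, 0 ≤ a g) (N : ℕ) (hN : ∀ g, (s.filter (fun w => ψ w = g)).card ≤ N) :
    ∑ w ∈ s, a (ψ w) ≤ N * ∑ g, a g := by
  rw [← Finset.sum_fiberwise s ψ, Finset.mul_sum]
  apply Finset.sum_le_sum
  intro g _
  rw [Finset.sum_congr rfl (g := fun _ => a g), Finset.sum_const, nsmul_eq_mul]
  · exact mul_le_mul_of_nonneg_right (by exact_mod_cast hN g) (ha g)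
  · intro w hw
    rw [(Finset.mem_filter.mp hw).2]

lemma bessel {L : Type} [Group L] [Fintype L] (f : L → ℂ) (O : Finset (L → ℂ))
    (hO : ∀ τ ∈ O, IrrC τ) (a : ℂ) 
    (ha : ∀ τ ∈ O, ∑ k, f k * (starRingEnd ℂ) (τ k) = Fintype.card L * a) :
    (Fintype.card L : ℝ) * O.card * ‖a‖ ^ 2 ≤ ∑ k, ‖f k‖ ^ 2 := by
  have h0 : 0 ≤ ∑ k, ‖f k - a * ∑ τ ∈ O, τ k‖ ^ 2 := by positivity
  have e1 : ∑ k, f k * (starRingEnd ℂ) (∑ τ ∈ O, τ k) = O.card * (Fintype.card L * a) := by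
    simp only [map_sum, Finset.mul_sum]
    rw [Finset.sum_comm, Finset.sum_congr rfl ha]
    simp
  have e2 : ∑ k, (∑ τ ∈ O, τ k) * (starRingEnd ℂ) (∑ τ ∈ O, τ k) = O.card * Fintype.card L := by
    simp only [map_sum, Finset.mul_sum, Finset.sum_mul]
    rw [Finset.sum_comm]
    have : ∀ τ ∈ O, ∑ k, ∑ σ ∈ O, σ k * (starRingEnd ℂ) (τ k) = Fintype.card L := by
      intro τ hτ
      rw [Finset.sum_comm]
      rw [Finset.sum_congr rfl (fun σ hσ => (hO σ hσ).orth (hO τ hτ))]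
      simp [hτ]
    rw [Finset.sum_congr rfl this]
    simp
  have e3 : ∑ k, (starRingEnd ℂ) (f k) * (∑ τ ∈ O, τ k) = O.card * (Fintype.card L * (starRingEnd ℂ) a) := by
    have := congrArg (starRingEnd ℂ) e1
    simpa [map_sum] using this
  have key : ((∑ k, ‖f k - a * ∑ τ ∈ O, τ k‖ ^ 2 : ℝ) : ℂ) = 
      ((∑ k, ‖f k‖ ^ 2 - Fintype.card L * O.card * ‖a‖ ^ 2 : ℝ) : ℂ) := by
    push_cast
    simp only [← Complex.mul_conj', map_sub, map_mul]
    calc _ = ∑ k, (f k * (starRingEnd ℂ) (f k) - (starRingEnd ℂ) a * (f k * (starRingEnd ℂ) (∑ τ ∈ O, τ k)) 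
        - a * ((starRingEnd ℂ) (f k) * (∑ τ ∈ O, τ k)) + a * (starRingEnd ℂ) a * ((∑ τ ∈ O, τ k) * (starRingEnd ℂ) (∑ τ ∈ O, τ k))) := by
          apply Finset.sum_congr rfl
          intro k _
          ring
      _ = _ := by
          rw [Finset.sum_add_distrib, Finset.sum_sub_distrib, Finset.sum_sub_distrib, ← Finset.mul_sum,
            ← Finset.mul_sum, ← Finset.mul_sum, e1, e2, e3]
          ring
  have key2 := Complex.ofReal_injective key
  linarith

lemma pow_part {G : Type} [Group G] [Finite G] (x0 : G) (L : Subgroup G)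
    (hL : ∀ l ∈ L, x0 * l = l * x0) (hcop : (orderOf x0).Coprime (Nat.card L)) (h : G)
    (i j : ℕ) (k k' : G) (hk : k ∈ L) (hk' : k' ∈ L)
    (he : h * (x0 ^ i * k) * h⁻¹ = x0 ^ j * k') : h * x0 ^ i * h⁻¹ = x0 ^ j := by
  obtain ⟨m, hm1, hm2⟩ := Nat.chineseRemainder hcop 1 0
  have key : ∀ i : ℕ, ∀ k ∈ L, (x0 ^ i * k) ^ m = x0 ^ i := by
    intro i k hk
    have hc : Commute (x0 ^ i) k := (show Commute x0 k from hL k hk).pow_left i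
    rw [hc.mul_pow]
    have h1 : k ^ m = 1 := by
      obtain ⟨w, rfl⟩ := (Nat.modEq_zero_iff_dvd.mp hm2)
      rw [pow_mul]
      have : k ^ Nat.card L = 1 := by
        have := pow_card_eq_one' (x := (⟨k, hk⟩ : L))
        exact congrArg Subtype.val this
      rw [this, one_pow]
    rw [h1, mul_one, ← pow_mul]
    rw [pow_eq_pow_iff_modEq]
    simpa using hm1.mul_left i
  have := congrArg (· ^ m) he
  simp only [conj_pow, key _ _ hk, key _ _ hk'] at this
  exact this

lemma section_bound {G : Type} [Group G] [Fintype G] {χ : G → ℂ} (h : IrrC χ) (x0 : G) (L : Subgroup G)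
    (hL : ∀ l ∈ L, x0 * l = l * x0) (hcop : (orderOf x0).Coprime (Nat.card L)) :
    ∑ i ∈ (Finset.range (orderOf x0)).filter (fun i => i.Coprime (orderOf x0)), 
      ∑ k : L, ‖χ (x0 ^ i * k)‖ ^ 2 ≤
      Nat.card (Subgroup.normalizer ((Subgroup.zpowers x0 : Subgroup G) : Set G)) := by
  set I := (Finset.range (orderOf x0)).filter (fun i => i.Coprime (orderOf x0)) with hI
  set N := Subgroup.normalizer ((Subgroup.zpowers x0 : Subgroup G) : Set G) with hN
  let s : Finset (G × (ℕ × L)) := Finset.univ ×ˢ (I ×ˢ Finset.univ)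
  let ψ : G × (ℕ × L) → G := fun w => w.1 * (x0 ^ w.2.1 * w.2.2) * w.1⁻¹
  have hsum : ∑ g, ‖χ g‖ ^ 2 = Nat.card G := by
    have := h.orth h
    rw [if_pos rfl] at this
    apply Complex.ofReal_injective
    push_cast
    simp only [← Complex.mul_conj']
    rw [this]; simp
  have hz : ∀ i ∈ I, Subgroup.zpowers (x0 ^ i) = Subgroup.zpowers x0 := by
    intro i hi
    have hic := (Finset.mem_filter.mp hi).2
    apply le_antisymm
    · rw [Subgroup.zpowers_le]
      exact Subgroup.npow_mem_zpowers x0 i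
    · rw [Subgroup.zpowers_le]
      obtain ⟨m, hm⟩ := exists_pow_eq_self_of_coprime hic
      have h9 := Subgroup.npow_mem_zpowers (x0 ^ i) m
      rwa [hm] at h9
  have hcard : ∀ g, (s.filter (fun w => ψ w = g)).card ≤ Nat.card N := by
    intro g
    rcases (s.filter (fun w => ψ w = g)).eq_empty_or_nonempty with he | ⟨⟨h0, i0, k0⟩, hw0⟩
    · rw [he]; simp
    · obtain ⟨hs0, hψ0⟩ := Finset.mem_filter.mp hw0
      simp only [s, Finset.mem_product, Finset.mem_univ, true_and, and_true] at hs0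
      have hNc : Nat.card N = (Finset.univ.filter (fun x => x ∈ N)).card := by
        rw [Nat.card_eq_fintype_card, Fintype.card_subtype]
      rw [hNc]
      apply Finset.card_le_card_of_injOn (fun w => h0⁻¹ * w.1)
      · rintro ⟨h1, i1, k1⟩ hw1
        obtain ⟨hs1, hψ1⟩ := Finset.mem_filter.mp hw1
        simp only [s, Finset.mem_product, Finset.mem_univ, true_and, and_true] at hs1
        simp only [Finset.coe_filter, Finset.mem_univ, true_and, Set.mem_ofPred_eq]
        have he : (h0⁻¹ * h1) * (x0 ^ i1 * k1) * (h0⁻¹ * h1)⁻¹ = x0 ^ i0 * k0 := by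
          have : h1 * (x0 ^ i1 * k1) * h1⁻¹ = h0 * (x0 ^ i0 * k0) * h0⁻¹ := hψ1.trans hψ0.symm
          calc _ = h0⁻¹ * (h1 * (x0 ^ i1 * k1) * h1⁻¹) * h0 := by group
            _ = _ := by rw [this]; group
        have h2 := pow_part x0 L hL hcop _ _ _ _ _ k1.2 k0.2 he
        have h3 : (Subgroup.zpowers x0).map (MulAut.conj (h0⁻¹ * h1)).toMonoidHom = Subgroup.zpowers x0 := by
          nth_rewrite 1 [← hz i1 hs1]
          rw [MonoidHom.map_zpowers, ← hz i0 hs0, ← h2]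
          rfl
        rw [hN, Subgroup.mem_normalizer_iff]
        intro y
        nth_rewrite 2 [← h3]
        constructor
        · intro hy
          exact ⟨y, hy, rfl⟩
        · rintro ⟨z, hz, hzz⟩
          have : z = y := (MulAut.conj (h0⁻¹ * h1)).injective hzz
          exact this ▸ hz
      · rintro ⟨h1, i1, k1⟩ hw1 ⟨h2, i2, k2⟩ hw2 heq
        obtain ⟨hs1, hψ1⟩ := Finset.mem_filter.mp hw1
        obtain ⟨hs2, hψ2⟩ := Finset.mem_filter.mp hw2
        simp only [s, Finset.mem_product, Finset.mem_univ, true_and, and_true] at hs1 hs2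
        have e1 : h1 = h2 := mul_left_cancel heq
        subst e1
        have e2 : x0 ^ i1 * (k1 : G) = x0 ^ i2 * k2 := by
          have : h1 * (x0 ^ i1 * k1) * h1⁻¹ = h1 * (x0 ^ i2 * k2) * h1⁻¹ := hψ1.trans hψ2.symm
          exact mul_left_cancel (mul_right_cancel this)
        have e3 := pow_part x0 L hL hcop 1 i1 i2 k1 k2 k1.2 k2.2 (by simpa using e2)
        simp only [one_mul, inv_one, mul_one] at e3
        have e4 : i1 = i2 := by
          apply pow_injOn_Iio_orderOf _ _ e3
          · simpa using (Finset.mem_filter.mp hs1).1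
          · simpa using (Finset.mem_filter.mp hs2).1
        subst e4
        have e5 := mul_left_cancel e2
        rw [Subtype.ext e5]
  have hb := sum_comp_le s ψ (fun g => ‖χ g‖ ^ 2) (fun g => by positivity) _ hcard
  rw [hsum, Finset.sum_product] at hb
  have hG0 : (0 : ℝ) < Nat.card G := by exact_mod_cast Nat.card_pos
  simp only [ψ, h.conj_inv, Finset.sum_const, nsmul_eq_mul, Finset.sum_product] at hb
  have : (Finset.univ : Finset G).card = Nat.card G := by simp
  rw [this, mul_comm] at hb
  exact le_of_mul_le_mul_right hb hG0

lemma IrrC.comp_equiv {L : Type} [Group L] {θ : L → ℂ} (h : IrrC θ) (e : L ≃* L) :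
    IrrC (fun k => θ (e k)) := by
  obtain ⟨W, _, _, _, σ, hσ, rfl⟩ := h
  let σ' : Representation ℂ L W := MonoidHom.comp σ e.toMonoidHom
  refine ⟨W, _, _, inferInstance, σ', ?_, rfl⟩
  let E : Subrepresentation σ' ≃o Subrepresentation σ :=
    { toFun := fun U => ⟨U.toSubmodule, fun g v hv => by
        have := U.apply_mem_toSubmodule (e.symm g) hv
        simpa [σ'] using this⟩
      invFun := fun U => ⟨U.toSubmodule, fun g v hv => U.apply_mem_toSubmodule (e g) hv⟩
      left_inv := fun U => rfl
      right_inv := fun U => rfl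
      map_rel_iff' := Iff.rfl }
  exact E.isSimpleOrder_iff.mpr hσ

def conjEquiv {G : Type} [Group G] (C L : Subgroup G)
    (hCL : ∀ c ∈ C, ∀ l ∈ L, c * l * c⁻¹ ∈ L) (c : C) : L ≃* L where
  toFun k := ⟨c * k * (c : G)⁻¹, hCL c c.2 k k.2⟩
  invFun k := ⟨(c : G)⁻¹ * k * c, by simpa using hCL (c : G)⁻¹ (inv_mem c.2) k k.2⟩
  left_inv k := by ext; simp [mul_assoc]
  right_inv k := by ext; simp [mul_assoc]
  map_mul' k l := by ext; simp [mul_assoc]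

lemma orbit_exists {G : Type} [Group G] [Fintype G] (C L : Subgroup G) 
    (hCL : ∀ c ∈ C, ∀ l ∈ L, c * l * c⁻¹ ∈ L) (hLC : L ≤ C) (x0 : G) (hx0 : x0 ∈ C)
    (hL : ∀ l ∈ L, x0 * l = l * x0) (hcop : (orderOf x0).Coprime (Nat.card L))
    (θ : L → ℂ) (hθ : IrrC θ) :
    ∃ O : Finset (L → ℂ), (∀ τ ∈ O, IrrC τ ∧ ∃ c ∈ C, ∀ k k' : L, (k' : G) = c * k * c⁻¹ → τ k' = θ k) ∧
      (∀ c ∈ C, ∀ k k' : L, (k' : G) = c * k * c⁻¹ → ∑ τ ∈ O, τ k' = ∑ τ ∈ O, τ k) ∧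
      O.card * (orderOf x0 * Nat.card L) ∣ Nat.card C ∧ O.Nonempty := by
  let act : MulAction C (L → ℂ) :=
    { smul := fun c f => fun k => f (conjEquiv C L hCL c⁻¹ k)
      one_smul := fun f => by
        funext k
        change f (conjEquiv C L hCL 1⁻¹ k) = f k
        congr 1
        ext
        simp [conjEquiv]
      mul_smul := fun a b f => by
        funext k
        change f (conjEquiv C L hCL (a * b)⁻¹ k) = f (conjEquiv C L hCL b⁻¹ (conjEquiv C L hCL a⁻¹ k))
        congr 1
        ext
        simp [conjEquiv, mul_assoc] }
  have hsm : ∀ (c : C) (f : L → ℂ) (k k' : L), (k' : G) = c * k * (c : G)⁻¹ → (c • f) k' = f k := by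
    intro c f k k' hk
    change f (conjEquiv C L hCL c⁻¹ k') = f k
    congr 1
    ext
    simp [conjEquiv, hk, mul_assoc]
  have hfin : (MulAction.orbit C θ).Finite := Set.finite_range _
  have hmem : ∀ τ, τ ∈ hfin.toFinset ↔ ∃ c : C, c • θ = τ := by
    intro τ
    rw [Set.Finite.mem_toFinset]
    rfl
  refine ⟨hfin.toFinset, ?_, ?_, ?_, ?_⟩
  · intro τ hτ
    obtain ⟨c, rfl⟩ := (hmem τ).mp hτ
    exact ⟨hθ.comp_equiv (conjEquiv C L hCL c⁻¹), c, c.2, hsm c θ⟩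
  · intro c hc k k' hk
    symm
    refine Finset.sum_bij' (fun τ _ => (⟨c, hc⟩ : C) • τ) (fun τ _ => (⟨c, hc⟩ : C)⁻¹ • τ) ?_ ?_ ?_ ?_ ?_
    · intro τ hτ
      obtain ⟨a, rfl⟩ := (hmem τ).mp hτ
      exact (hmem _).mpr ⟨_, mul_smul _ _ _⟩
    · intro τ hτ
      obtain ⟨a, rfl⟩ := (hmem τ).mp hτ
      exact (hmem _).mpr ⟨_, mul_smul _ _ _⟩
    · intro τ hτ
      exact inv_smul_smul _ _
    · intro τ hτ
      exact smul_inv_smul _ _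
    · intro τ hτ
      exact (hsm ⟨c, hc⟩ τ k k' hk).symm
  · have h1 : Nat.card (MulAction.orbit C θ) * Nat.card (MulAction.stabilizer C θ) = Nat.card C := by
      rw [← Nat.card_prod]
      exact Nat.card_congr (MulAction.orbitProdStabilizerEquivGroup C θ)
    have h2 : hfin.toFinset.card = Nat.card (MulAction.orbit C θ) := by
      rw [← Set.ncard_eq_toFinset_card _ hfin]
      rfl
    rw [← h1, h2]
    apply Nat.mul_dvd_mul_left
    apply Nat.Coprime.mul_dvd_of_dvd_of_dvd hcop
    · have : orderOf x0 = orderOf (⟨x0, hx0⟩ : C) := by simp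
      rw [this, ← Nat.card_zpowers]
      apply Subgroup.card_dvd_of_le
      rw [Subgroup.zpowers_le, MulAction.mem_stabilizer_iff]
      funext k
      apply hsm
      change (k : G) = x0 * k * x0⁻¹
      rw [hL k k.2]; simp
    · have : Nat.card L = Nat.card (L.subgroupOf C) :=
        Nat.card_congr (Subgroup.subgroupOfEquivOfLe hLC).toEquiv.symm
      rw [this]
      apply Subgroup.card_dvd_of_le
      intro c hc
      rw [MulAction.mem_stabilizer_iff]
      funext k
      have hc' : (c : G) ∈ L := hc
      have := hsm c θ ((⟨c, hc'⟩ : L)⁻¹ * k * ⟨c, hc'⟩) k (by simp [mul_assoc])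
      rw [this]
      have h3 := hθ.conj_inv (⟨c, hc'⟩ : L)⁻¹ k
      simpa using h3
  · exact ⟨θ, (hmem θ).mpr ⟨1, one_smul _ _⟩⟩

lemma decomp_XL {G : Type} [Group G] [Finite G] {χ : G → ℂ} (h : IrrC χ) (x0 : G) (L : Subgroup G)
    (hL : ∀ l ∈ L, x0 * l = l * x0) :
    ∃ s : Multiset ((Subgroup.zpowers x0 →* ℂ) × (L → ℂ)), (∀ q ∈ s, IrrC q.2) ∧
      ∀ (x : Subgroup.zpowers x0) (k : L), χ (x * k) = (s.map (fun q => q.1 x * q.2 k)).sum := by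
  obtain ⟨W, _, _, _, σ, hσ, rfl⟩ := h
  let : CommGroup (Subgroup.zpowers x0) := IsCyclic.commGroup
  let f : (Subgroup.zpowers x0) × L →* G := 
    (Subgroup.zpowers x0).subtype.noncommCoprod L.subtype (by
      rintro ⟨x, hx⟩ ⟨l, hl⟩
      obtain ⟨i, rfl⟩ := hx
      exact (show Commute x0 l from hL l hl).zpow_left i)
  obtain ⟨s, hs, hs2⟩ := exists_decomp_prod (MonoidHom.comp σ f : Representation ℂ _ W)
  refine ⟨s, hs, ?_⟩
  intro x k
  rw [← hs2]
  rfl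

lemma inner_filter {X L : Type} [Group X] [Group L] [Fintype L] (s : Multiset ((X →* ℂ) × (L → ℂ)))
    (hs : ∀ q ∈ s, IrrC q.2) (τ : L → ℂ) (hτ : IrrC τ) (x : X) :
    ∑ k, (s.map (fun q => q.1 x * q.2 k)).sum * (starRingEnd ℂ) (τ k) = 
      Fintype.card L * (((s.filter (fun q => q.2 = τ)).map Prod.fst).map (fun l => l x)).sum := by
  induction s using Multiset.induction with
  | empty => simp
  | cons a s ih =>
    have ih' := ih (fun q hq => hs q (Multiset.mem_cons_of_mem hq))
    simp only [Multiset.map_cons, Multiset.sum_cons, add_mul, Finset.sum_add_distrib]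
    rw [ih']
    have h1 : ∑ k, a.1 x * a.2 k * (starRingEnd ℂ) (τ k) = a.1 x * if a.2 = τ then (Fintype.card L : ℂ) else 0 := by
      rw [← (hs a (Multiset.mem_cons_self a s)).orth hτ, Finset.mul_sum]
      apply Finset.sum_congr rfl
      intro k _
      ring
    rw [h1, Multiset.filter_cons]
    split_ifs with h2
    · simp
      ring
    · simp

lemma zero_of_inner {X L : Type} [Group X] [Group L] [Fintype L] (s : Multiset ((X →* ℂ) × (L → ℂ)))
    (x : X) (f : L → ℂ) (hf : ∀ k, f k = (s.map (fun q => q.1 x * q.2 k)).sum)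
    (h0 : ∀ q ∈ s, ∑ k, f k * (starRingEnd ℂ) (q.2 k) = 0) (k : L) : f k = 0 := by
  have key : ∀ t : Multiset ((X →* ℂ) × (L → ℂ)), (∀ q ∈ t, ∑ k, f k * (starRingEnd ℂ) (q.2 k) = 0) →
      ∑ k, f k * (starRingEnd ℂ) ((t.map (fun q => q.1 x * q.2 k)).sum) = 0 := by
    intro t
    induction t using Multiset.induction with
    | empty => simp
    | cons a t ih =>
      intro ht
      simp only [Multiset.map_cons, Multiset.sum_cons, map_add, mul_add, Finset.sum_add_distrib]
      rw [ih (fun q hq => ht q (Multiset.mem_cons_of_mem hq)), add_zero]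
      have h1 := ht a (Multiset.mem_cons_self a t)
      calc _ = (starRingEnd ℂ) (a.1 x) * ∑ k, f k * (starRingEnd ℂ) (a.2 k) := by
            rw [Finset.mul_sum]
            apply Finset.sum_congr rfl
            intro k _
            rw [map_mul]; ring
        _ = 0 := by rw [h1, mul_zero]
  have h2 := key s h0
  simp only [← hf] at h2
  have h3 : ∑ k, ‖f k‖ ^ 2 = 0 := by
    apply Complex.ofReal_injective
    push_cast
    simp only [← Complex.mul_conj']
    exact h2
  rw [Finset.sum_eq_zero_iff_of_nonneg (fun _ _ => by positivity)] at h3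
  simpa using h3 k (Finset.mem_univ k)

lemma pow_contra (p N a b r : ℕ) (hp : p.Prime) (hr : 0 < r) (hbr : b + r ≤ N) (hra : N < r + a)
    (S : ℝ) (h1 : ((p ^ (a - b) : ℕ) : ℝ) ^ 2 * Nat.totient (p ^ r) ≤ S)
    (h2 : (p : ℝ) ^ b * S ≤ (p - 1 : ℕ) * (p : ℝ) ^ N) : False := by
  rw [Nat.totient_prime_pow hp hr] at h1
  have hpb : (0 : ℝ) < (p : ℝ) ^ b := by
    have := hp.pos
    positivity
  have h3 := (mul_le_mul_of_nonneg_left h1 hpb.le).trans h2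
  have h4 : p ^ b * ((p ^ (a - b)) ^ 2 * (p ^ (r - 1) * (p - 1))) ≤ (p - 1) * p ^ N := by
    exact_mod_cast h3
  have h5 : p ^ (b + (a - b) * 2 + (r - 1)) * (p - 1) ≤ p ^ N * (p - 1) := by
    calc _ = p ^ b * ((p ^ (a - b)) ^ 2 * (p ^ (r - 1) * (p - 1))) := by
          rw [pow_add, pow_add, pow_mul]; ring
      _ ≤ _ := by rw [mul_comm (p ^ N)]; exact h4
  have h6 := Nat.le_of_mul_le_mul_right h5 (Nat.sub_pos_of_lt hp.one_lt)
  have h7 := (Nat.pow_le_pow_iff_right hp.one_lt).mp h6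
  omega

lemma int_div (c η : ℂ) (hc : IsIntegral ℤ c) (hη : IsIntegral ℤ η) (m t : ℕ) (ht : 0 < t)
    (hcop : m.Coprime t) (he : c * t = m * η) : IsIntegral ℤ (η / t) := by
  obtain ⟨u, v, huv⟩ := Nat.isCoprime_iff_coprime.mpr hcop
  have ht0 : (t : ℂ) ≠ 0 := by exact_mod_cast ht.ne'
  have huv' : (u : ℂ) * m + v * t = 1 := by exact_mod_cast huv
  have : η / t = u * c + v * η := by
    rw [div_eq_iff ht0]
    linear_combination (-u : ℂ) * he - η * huv'
  rw [this]
  exact ((isIntegral_algebraMap (R := ℤ) (A := ℂ) (x := u)).mul hc).add 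
    ((isIntegral_algebraMap (R := ℤ) (A := ℂ) (x := v)).mul hη)

lemma sum_on_subgroup {G : Type} [Group G] [Fintype G] (L : Subgroup G) (f : G → ℂ)
    (hf : ∀ g, g ∉ L → f g = 0) : ∑ g, f g = ∑ k : L, f k := by
  have h1 : ∑ g ∈ Finset.univ.filter (fun g => g ∈ L), f g = ∑ k : L, f k :=
    Finset.sum_subtype _ (by simp) f
  rw [← h1, Finset.sum_filter]
  apply Finset.sum_congr rfl
  intro g _
  split_ifs with h
  · rfl
  · exact hf g h

lemma divisibility {G : Type} [Group G] [Fintype G] {χ : G → ℂ} (h : IrrC χ) (x0 : G) (L : Subgroup G)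
    (hL : ∀ l ∈ L, x0 * l = l * x0) (hcop : (orderOf x0).Coprime (Nat.card L))
    (hCL : ∀ c ∈ Subgroup.centralizer {x0}, ∀ l ∈ L, c * l * c⁻¹ ∈ L)
    (O : Finset (L → ℂ)) (hO : ∀ τ ∈ O, IrrC τ)
    (hinv : ∀ c ∈ Subgroup.centralizer {x0}, ∀ k k' : L, (k' : G) = c * k * c⁻¹ → 
      ∑ τ ∈ O, τ k' = ∑ τ ∈ O, τ k)
    (η : ℂ) (hη : ∀ τ ∈ O, ∑ k : L, χ (x0 * k) * (starRingEnd ℂ) (τ k) = Nat.card L * η) :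
    ∃ c : ℂ, IsIntegral ℤ c ∧ c * χ 1 * Nat.card (Subgroup.centralizer {x0}) = 
      Nat.card G * (O.card * (Nat.card L * η)) := by
  let C := Subgroup.centralizer {x0}
  let F : G → ℂ := fun g => if hg : x0⁻¹ * g ∈ L then (starRingEnd ℂ) (∑ τ ∈ O, τ ⟨x0⁻¹ * g, hg⟩) else 0
  have hF0 : ∀ g, F g ≠ 0 → x0⁻¹ * g ∈ L := by
    intro g hg
    by_contra hn
    exact hg (dif_neg hn)
  have hFk : ∀ k : L, F (x0 * k) = (starRingEnd ℂ) (∑ τ ∈ O, τ k) := by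
    intro k
    have : x0⁻¹ * (x0 * k) ∈ L := by simp
    simp [F]
  have hcm : ∀ c ∈ C, ∀ g, x0⁻¹ * (c * g * c⁻¹) = c * (x0⁻¹ * g) * c⁻¹ := by
    intro c hc g
    have h1 : c * x0 = x0 * c := Subgroup.mem_centralizer_singleton_iff.mp hc
    have h2 : x0⁻¹ * c = c * x0⁻¹ := by
      rw [inv_mul_eq_iff_eq_mul, ← mul_assoc, ← h1]; simp
    rw [← mul_assoc, ← mul_assoc, h2]; group
  suffices hcp : ∃ c : ℂ, IsIntegral ℤ c ∧
      c * χ 1 * Nat.card C = Nat.card G * ∑ g, F g * χ g by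
    obtain ⟨c, hc, hc2⟩ := hcp
    refine ⟨c, hc, ?_⟩
    rw [hc2]
    congr 1
    rw [← Equiv.sum_comp (Equiv.mulLeft x0), sum_on_subgroup L]
    · simp only [Equiv.coe_mulLeft, hFk, map_sum, Finset.sum_mul]
      rw [Finset.sum_comm]
      rw [Finset.sum_congr rfl (g := fun _ => (Nat.card L * η : ℂ))]
      · simp
      · intro τ hτ
        rw [← hη τ hτ]
        apply Finset.sum_congr rfl
        intro k _
        ring
    · intro g hg
      simp only [Equiv.coe_mulLeft]
      have : F (x0 * g) = 0 := by
        by_contra hn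
        apply hg
        simpa using hF0 _ hn
      rw [this, zero_mul]
  apply central_pair h C F
  · intro g
    by_cases hg : x0⁻¹ * g ∈ L
    · simp only [F, dif_pos hg]
      apply IsIntegral.map (starRingEnd ℂ).toIntAlgHom
      exact IsIntegral.sum _ (fun τ hτ => (hO τ hτ).integral _)
    · simp only [F, dif_neg hg]
      exact isIntegral_zero
  · intro c hc g
    by_cases hg : x0⁻¹ * g ∈ L
    · have hg' : x0⁻¹ * (c * g * c⁻¹) ∈ L := by
        rw [hcm c hc]
        exact hCL c hc _ hg
      simp only [F, dif_pos hg, dif_pos hg']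
      rw [hinv c hc ⟨_, hg⟩ ⟨_, hg'⟩ (hcm c hc g)]
    · have hg' : ¬ x0⁻¹ * (c * g * c⁻¹) ∈ L := by
        rw [hcm c hc]
        intro hn
        apply hg
        have := hCL c⁻¹ (inv_mem hc) _ hn
        simpa [mul_assoc] using this
      simp only [F, dif_neg hg, dif_neg hg']
  · intro x g h1 h2
    have h1' := hF0 _ h1
    have h2' := hF0 _ h2
    have := pow_part x0 L hL hcop x 1 1 _ _ h1' h2' (by simp)
    rw [Subgroup.mem_centralizer_singleton_iff]
    rw [pow_one] at this
    exact mul_inv_eq_iff_eq_mul.mp this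

lemma eta_conj {G : Type} [Group G] [Fintype G] {χ : G → ℂ} (h : IrrC χ) (L : Subgroup G)
    (y c : G) (hcy : c * y = y * c) (hCL : ∀ l ∈ L, c * l * c⁻¹ ∈ L) (hCL' : ∀ l ∈ L, c⁻¹ * l * c ∈ L) 
    (θ τ : L → ℂ) (hτ : ∀ k k' : L, (k' : G) = c * k * c⁻¹ → τ k' = θ k) :
    ∑ k : L, χ (y * k) * (starRingEnd ℂ) (τ k) = ∑ k : L, χ (y * k) * (starRingEnd ℂ) (θ k) := by
  let e : L ≃ L :=
    { toFun := fun k => ⟨c * k * c⁻¹, hCL k k.2⟩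
      invFun := fun k => ⟨c⁻¹ * k * c, hCL' k k.2⟩
      left_inv := fun k => by ext; simp [mul_assoc]
      right_inv := fun k => by ext; simp [mul_assoc] }
  symm
  refine Fintype.sum_equiv e _ _ ?_
  intro k
  rw [hτ k (e k) rfl]
  congr 1
  rw [← h.conj_inv c]
  congr 1
  change c * (y * k) * c⁻¹ = y * (c * k * c⁻¹)
  rw [← mul_assoc, hcy]; group

lemma core {p : ℕ} [hp : Fact p.Prime] {G : Type} [Group G] [Fintype G] (P : Sylow p G)
    (hP : IsCyclic P) {χ : G → ℂ} (h : IrrC χ) (d : ℕ) (hd : χ 1 = d) (x0 : G) (hx0 : x0 ∈ P)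
    (hord : Nat.card P < orderOf x0 * p ^ (d.factorization p)) : χ x0 = 0 := by
  obtain ⟨d', hd0, hd'⟩ := h.one_ne
  have hdd : d' = d := by exact_mod_cast hd'.symm.trans hd
  subst hdd
  obtain ⟨n, hn⟩ := h.deg_dvd d' hd
  rw [← Nat.card_eq_fintype_card] at hn
  have hG0 : Nat.card G ≠ 0 := Nat.card_pos.ne'
  have hn0 : n ≠ 0 := by
    rintro rfl
    exact hG0 (by simpa using hn)
  have hPc := P.card_eq_multiplicity
  set N := (Nat.card G).factorization p with hN
  set a := d'.factorization p with ha
  have hNa : N = a + n.factorization p := by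
    rw [hN, hn, Nat.factorization_mul hd0.ne' hn0]; rfl
  have hne : x0 ≠ 1 := by
    rintro rfl
    rw [orderOf_one, one_mul, hPc, Nat.pow_lt_pow_iff_right hp.out.one_lt] at hord
    omega
  obtain ⟨r, hr⟩ := (P.2.to_le (show Subgroup.zpowers x0 ≤ P by rw [Subgroup.zpowers_le]; exact hx0)).exists_card_eq
  rw [Nat.card_zpowers] at hr
  have hr0 : 0 < r := by
    rcases Nat.eq_zero_or_pos r with h | h
    · exfalso
      rw [h, pow_zero] at hr
      exact hne (orderOf_eq_one_iff.mp hr)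
    · exact h
  have hra : N < r + a := by
    rw [hPc, hr, ← pow_add, Nat.pow_lt_pow_iff_right hp.out.one_lt] at hord
    exact hord
  obtain ⟨L, hL, hCL, hcard, hpL⟩ := exists_compl P hP x0 hx0 hne
  have hNb := card_normalizer_le P hP x0 hx0 hne
  have hL0 : 0 < Nat.card L := Nat.card_pos
  have hcop : (orderOf x0).Coprime (Nat.card L) := by
    rw [hr]
    exact Nat.Coprime.pow_left _ ((Nat.Prime.coprime_iff_not_dvd hp.out).mpr hpL)
  have hCL' : ∀ c ∈ Subgroup.centralizer {x0}, ∀ l ∈ L, c * l * c⁻¹ ∈ L := fun c hc =>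
    hCL c (Subgroup.mem_centralizer_singleton_iff.mp hc)
  obtain ⟨s, hs, hs2⟩ := decomp_XL h x0 L hL
  let γ : Subgroup.zpowers x0 := ⟨x0, Subgroup.mem_zpowers x0⟩
  have hγ : ∀ (i : ℕ) (k : L), χ (x0 ^ i * k) = (s.map (fun q => q.1 (γ ^ i) * q.2 k)).sum := 
    fun i k => hs2 (γ ^ i) k
  have hzero : ∀ q ∈ s, ∑ k : L, χ (x0 * k) * (starRingEnd ℂ) (q.2 k) = 0 := by
    intro q hq
    by_contra hne0
    have hθ := hs q hq
    set θ := q.2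
    obtain ⟨O, hO1, hO2, hO3, hO4⟩ := orbit_exists (Subgroup.centralizer {x0}) L hCL' (by
      intro l hl
      rw [Subgroup.mem_centralizer_singleton_iff]
      exact (hL l hl).symm) x0 (by rw [Subgroup.mem_centralizer_singleton_iff]) hL hcop θ hθ
    let sθ := (s.filter (fun q => q.2 = θ)).map Prod.fst
    let η : ℕ → ℂ := fun i => (sθ.map (fun l => l (γ ^ i))).sum
    have hη : ∀ i, ∑ k : L, χ (x0 ^ i * k) * (starRingEnd ℂ) (θ k) = Nat.card L * η i := by
      intro i
      simp only [hγ]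
      rw [inner_filter s hs θ hθ, Nat.card_eq_fintype_card]
    have hηO : ∀ i, ∀ τ ∈ O, ∑ k : L, χ (x0 ^ i * k) * (starRingEnd ℂ) (τ k) = Nat.card L * η i := by
      intro i τ hτ
      obtain ⟨_, c, hc, hcτ⟩ := hO1 τ hτ
      rw [← hη i]
      have hcx : Commute c x0 := Subgroup.mem_centralizer_singleton_iff.mp hc
      apply eta_conj h L (x0 ^ i) c (hcx.pow_right i) (hCL' c hc) _ _ _ hcτ
      intro l hl
      simpa using hCL' c⁻¹ (inv_mem hc) l hl
    have hη1 : η 1 ≠ 0 := by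
      intro h0
      apply hne0
      have := hη 1
      rw [h0, mul_zero, pow_one] at this
      exact this
    have hηint : IsIntegral ℤ (η 1) := by
      apply IsIntegral.multiset_sum
      intro z hz
      obtain ⟨l, _, rfl⟩ := Multiset.mem_map.mp hz
      exact (hom_conj l _).2
    rw [← hcard, mul_comm (Nat.card L), ← mul_assoc] at hO3
    have hO5 := Nat.dvd_of_mul_dvd_mul_right hL0 hO3
    rw [hPc, hr] at hO5
    obtain ⟨b, hbN, hb⟩ := (Nat.dvd_prime_pow hp.out).mp ((Dvd.intro _ rfl).trans hO5)
    rw [hb, ← pow_add, Nat.pow_dvd_pow_iff_le_right hp.out.one_lt] at hO5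
    obtain ⟨c, hc, hc2⟩ := divisibility h x0 L hL hcop hCL' O (fun τ hτ => (hO1 τ hτ).1) hO2 (η 1) (by
      have := hηO 1
      simpa using this)

    obtain ⟨m, hm⟩ := Nat.ordProj_dvd n p
    have hmp : ¬ p ∣ m := by
      have h1 := Nat.not_dvd_ordCompl hp.out hn0
      have h2 : n / p ^ n.factorization p = m := by
        apply Nat.div_eq_of_eq_mul_right (pow_pos hp.out.pos _) hm
      rwa [h2] at h1
    have hceq : c * (p ^ (a - b) : ℕ) = m * η 1 := by
      rw [hd, ← hcard, hPc, hn, hb] at hc2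
      have e1 : p ^ N = p ^ (a - b) * (p ^ b * p ^ (n.factorization p)) := by
        rw [← pow_add, ← pow_add]
        congr 1
        omega
      rw [e1] at hc2
      have hmC : (n : ℂ) = p ^ (n.factorization p) * m := by exact_mod_cast hm
      push_cast at hc2 ⊢
      rw [hmC] at hc2
      have hpC : (p : ℂ) ≠ 0 := by exact_mod_cast hp.out.ne_zero
      have hdC : (d' : ℂ) ≠ 0 := by exact_mod_cast hd0.ne'
      have hLC : (Nat.card L : ℂ) ≠ 0 := by exact_mod_cast hL0.ne'
      have hk : (d' : ℂ) * Nat.card L * (p ^ b * p ^ (n.factorization p)) ≠ 0 := by positivity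
      apply mul_left_cancel₀ hk
      linear_combination hc2
    have hdiv := int_div c (η 1) hc hηint m (p ^ (a - b)) (pow_pos hp.out.pos _)
      (Nat.Coprime.pow_right _ ((Nat.coprime_comm.mp ((Nat.Prime.coprime_iff_not_dvd hp.out).mpr hmp)))) hceq
    have hnb := hom_norm_bound γ sθ (p ^ (a - b)) (pow_pos hp.out.pos _) 1 (Nat.coprime_one_left _) hη1 hdiv
    rw [Nat.card_zpowers] at hnb
    have hsb := section_bound h x0 L hL hcop
    have hbes : ∀ i, (Nat.card L : ℝ) * O.card * ‖η i‖ ^ 2 ≤ ∑ k : L, ‖χ (x0 ^ i * k)‖ ^ 2 := by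
      intro i
      have := bessel (fun k : L => χ (x0 ^ i * k)) O (fun τ hτ => (hO1 τ hτ).1) (η i) (by
        intro τ hτ
        rw [← Nat.card_eq_fintype_card]
        exact hηO i τ hτ)
      rwa [← Nat.card_eq_fintype_card] at this
    have hfin := (Finset.sum_le_sum (fun i _ => hbes i)).trans hsb
    rw [← Finset.mul_sum] at hfin
    have hfin2 := hfin.trans (Nat.cast_le.mpr hNb)
    rw [← hcard, hPc, hb] at hfin2
    rw [hr] at hnb hfin2
    refine pow_contra p N a b r hp.out hr0 hO5 hra _ hnb ?_
    have hLR : (0 : ℝ) < Nat.card L := by exact_mod_cast hL0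
    refine le_of_mul_le_mul_left ?_ hLR
    push_cast at hfin2 ⊢
    calc _ = _ := by rw [← mul_assoc]
      _ ≤ _ := hfin2
      _ = _ := by ring
  have := zero_of_inner s γ (fun k : L => χ (x0 * k)) (fun k => hs2 γ k) hzero 1
  simpa using this

lemma hom_irrC {Q : Type} [Group Q] [Fintype Q] (l : Q →* ℂ) : IrrC (l : Q → ℂ) := by
  obtain ⟨V, hV, he⟩ := hom_simple l
  rw [he]
  exact simple_irrC V hV

lemma hom_inner {H : Type} [Group H] [Fintype H] (M : Multiset (H →* ℂ)) (μ : H →* ℂ) :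
    ∑ g, (M.map (fun l => l g)).sum * (starRingEnd ℂ) (μ g) = Fintype.card H * M.count μ := by
  have h := multiset_inner (M.map (fun l : H →* ℂ => (l : H → ℂ))) (by
    intro θ hθ
    obtain ⟨l, _, rfl⟩ := Multiset.mem_map.mp hθ
    exact hom_irrC l) μ (hom_irrC μ)
  rw [Multiset.count_map_eq_count' (fun l : H →* ℂ => (l : H → ℂ)) M DFunLike.coe_injective μ] at h
  rw [← h]
  apply Finset.sum_congr rfl
  intro g _
  congr 1
  have := map_multiset_sum (Pi.evalAddMonoidHom (fun _ : H => ℂ) g) (M.map (fun l : H →* ℂ => (l : H → ℂ)))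
  simp only [Pi.evalAddMonoidHom_apply, Multiset.map_map, Function.comp_def] at this
  exact this.symm

lemma comm_assembly {A : Type} [Group A] [Fintype A] (hc : ∀ x y : A, x * y = y * x) (Q : Subgroup A)
    (M : Multiset (A →* ℂ)) (hv : ∀ x, x ∉ Q → (M.map (fun l => l x)).sum = 0) :
    ∃ (n : ℕ) (lam : Fin n → (Q →* ℂ)), ∀ x, (M.map (fun l => l x)).sum = 
      ∑ i, inducedChar Q (lam i) x := by
  have hQ0 : (Fintype.card Q : ℂ) ≠ 0 := by exact_mod_cast Fintype.card_ne_zero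
  have hcard : (Fintype.card A : ℂ) = Fintype.card Q * Q.index := by
    have := Q.card_mul_index
    rw [Nat.card_eq_fintype_card, Nat.card_eq_fintype_card] at this
    exact_mod_cast this.symm
  let M' : Multiset (Q →* ℂ) := M.map (fun l => l.comp Q.subtype)
  have hdvd : ∀ l ∈ M', Q.index ∣ M'.count l := by
    intro l hl
    obtain ⟨μ, hμ, rfl⟩ := Multiset.mem_map.mp hl
    have h1 := hom_inner M' (μ.comp Q.subtype)
    have h2 := hom_inner M μ
    rw [sum_on_subgroup Q _ (by
      intro g hg
      rw [hv g hg, zero_mul])] at h2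
    have h3 : (Fintype.card Q : ℂ) * M'.count (μ.comp Q.subtype) = Fintype.card A * M.count μ := by
      rw [← h1, ← h2]
      apply Finset.sum_congr rfl
      intro k _
      simp [M', Multiset.map_map, Function.comp_def]
    rw [hcard, mul_assoc] at h3
    have h4 := mul_left_cancel₀ hQ0 h3
    exact ⟨M.count μ, by exact_mod_cast h4⟩
  obtain ⟨s, hs⟩ := Multiset.exists_smul_of_dvd_count M' hdvd
  refine ⟨s.toList.length, fun i => s.toList.get i, ?_⟩
  intro x
  have hind : ∀ l : Q →* ℂ, inducedChar Q l x = if h : x ∈ Q then Q.index * l ⟨x, h⟩ else 0 := by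
    intro l
    have hxx : ∀ y : A, y * x * y⁻¹ = x := fun y => by rw [hc y x]; simp
    unfold inducedChar
    simp only [hxx]
    split_ifs with h
    · rw [Finset.sum_congr rfl (g := fun _ => l ⟨x, h⟩) (fun y _ => rfl), Finset.sum_const, nsmul_eq_mul, Finset.card_univ, hcard]
      field_simp
    · simp
  simp only [hind]
  split_ifs with h
  · have h1 : (M.map (fun l => l x)).sum = (M'.map (fun l => l ⟨x, h⟩)).sum := by
      simp [M', Multiset.map_map, Function.comp_def]
    rw [h1, hs, Multiset.map_nsmul, Multiset.sum_nsmul, nsmul_eq_mul, ← Finset.mul_sum]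
    congr 1
    nth_rewrite 1 [← Multiset.coe_toList s]
    rw [Multiset.map_coe, Multiset.sum_coe]
    exact (Fin.sum_univ_fun_getElem s.toList _).symm
  · rw [hv x h]
    simp

theorem strong_form_of_cyclic_sylow
    (p : ℕ) [Fact p.Prime] (G : Type) [Group G] [Fintype G]
    (P : Sylow p G) (hcyc : IsCyclic ↥(P : Subgroup G)) :
    ∀ (V : FDRep ℂ G), CategoryTheory.Simple V →
      SumInducedProperty p (P : Subgroup G) V.character (Module.finrank ℂ V) := by
  intro V hV
  have hp : p.Prime := Fact.out
  have h := simple_irrC V hV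
  have hd : V.character 1 = (Module.finrank ℂ V : ℕ) := FDRep.char_one V
  generalize Module.finrank ℂ V = d at hd
  generalize V.character = χ at h hd
  obtain ⟨d', hd0, hd'⟩ := h.one_ne
  have hdd : d' = d := by exact_mod_cast hd'.symm.trans hd
  subst hdd
  obtain ⟨n, hn⟩ := h.deg_dvd d' hd
  rw [← Nat.card_eq_fintype_card] at hn
  have hG0 : Nat.card G ≠ 0 := Nat.card_pos.ne'
  have hPc := P.card_eq_multiplicity
  have haN : d'.factorization p ≤ (Nat.card G).factorization p :=
    (Nat.factorization_le_iff_dvd hd0.ne' hG0).mpr (Dvd.intro _ hn.symm) p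
  set a := d'.factorization p with ha
  set N := (Nat.card G).factorization p with hN
  obtain ⟨Q, hQ⟩ := Sylow.exists_subgroup_card_pow_prime (G := (P : Subgroup G)) p (n := N - a) (by
    rw [hPc]
    exact pow_dvd_pow _ (Nat.sub_le _ _))
  have hQi : p ^ a = Q.index := by
    have := Q.card_mul_index
    rw [hQ, hPc] at this
    apply Nat.eq_of_mul_eq_mul_left (pow_pos hp.pos (N - a))
    rw [this, ← pow_add]
    congr 1
    omega
  have hc : ∀ x y : (P : Subgroup G), x * y = y * x :=
    fun x y => (IsCyclic.commGroup (α := (P : Subgroup G))).mul_comm x y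
  have hvan : ∀ x : (P : Subgroup G), x ∉ Q → χ x = 0 := by
    intro x hx
    apply core P hcyc h d' hd x x.2
    by_contra hlt
    push Not at hlt
    apply hx
    obtain ⟨r, hr⟩ := (P.2.to_le (show Subgroup.zpowers (x : G) ≤ P by
      rw [Subgroup.zpowers_le]; exact x.2)).exists_card_eq
    rw [Nat.card_zpowers] at hr
    rw [hPc, hr, ← pow_add, Nat.pow_le_pow_iff_right hp.one_lt] at hlt
    have hx1 : x ^ p ^ (N - a) = 1 := by
      apply orderOf_dvd_iff_pow_eq_one.mp
      rw [← Subgroup.orderOf_coe, hr]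
      exact pow_dvd_pow _ (by omega)
    have hle := IsCyclic.card_pow_eq_one_le (α := (P : Subgroup G)) (n := p ^ (N - a)) (pow_pos hp.pos _)
    have hsub : Finset.univ.filter (fun y => y ∈ Q) ⊆ 
        Finset.univ.filter (fun y : (P : Subgroup G) => y ^ p ^ (N - a) = 1) := by
      intro y hy
      simp only [Finset.mem_filter, Finset.mem_univ, true_and] at hy ⊢
      have := pow_card_eq_one' (x := (⟨y, hy⟩ : Q))
      rw [hQ] at this
      exact congrArg Subtype.val this
    have hQc : (Finset.univ.filter (fun y => y ∈ Q)).card = p ^ (N - a) := by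
      rw [← hQ, Nat.card_eq_fintype_card, Fintype.card_subtype]
    have heq := Finset.eq_of_subset_of_card_le hsub (by rw [hQc]; exact hle)
    have hxm : x ∈ Finset.univ.filter (fun y : (P : Subgroup G) => y ^ p ^ (N - a) = 1) := by simpa using hx1
    rw [← heq] at hxm
    simpa using hxm
  obtain ⟨M, hM⟩ : ∃ M : Multiset ((P : Subgroup G) →* ℂ), ∀ x : (P : Subgroup G),
      χ x = (M.map (fun l => l x)).sum := by
    obtain ⟨W, _, _, _, σ, _, rfl⟩ := h
    let : CommGroup (P : Subgroup G) := IsCyclic.commGroup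
    obtain ⟨M, hM⟩ := exists_decomp_comm (MonoidHom.comp σ (P : Subgroup G).subtype : Representation ℂ _ W)
    exact ⟨M, fun x => by rw [← hM]; rfl⟩
  obtain ⟨m, lam, hlam⟩ := comm_assembly hc Q M (fun x hx => by rw [← hM]; exact hvan x hx)
  exact ⟨m, fun _ => Q, fun i => lam i, fun i => hom_simple (lam i), fun _ => hQi,
    fun x => by rw [hM, hlam]⟩
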